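/- arXiv:2312.01717 — 3 statements merged into one kernel-verified Lean document; each statement's English description precedes it below -/
import Mathlib

section
/- Let V be a real vector space with a symmetric positive bilinear form 𝔅, let r ∈ ℕ₊, and define the 2r-linear form Λ(u₁,…,u_{2r}) := 𝔅(u₁,u₂)⋯𝔅(u_{2r−1},u_{2r}). Let 𝒫 be a partition of {1,…,2r} all of whose blocks have exactly two elements, and let v₁,…,v_L ∈ V. Then ∑_{(l_P)_{P∈𝒫}} Λ(v_{l_{𝒫(1)}},…,v_{l_{𝒫(2r)}}) ≥ 0, where the sum is over independent indices 1 ≤ l_P ≤ L for each block P and 𝒫(j) denotes the block containing j. -/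
open Finset

lemma aux_spectral {V : Type*} [AddCommGroup V] [Module ℝ V]
    (B : V →ₗ[ℝ] V →ₗ[ℝ] ℝ)
    (hsym : ∀ u v : V, B u v = B v u) (hpos : ∀ v : V, 0 ≤ B v v)
    (L : ℕ) (v : Fin L → V) :
    ∃ (d : Fin L → ℝ) (U : Fin L → Fin L → ℝ), (∀ k, 0 ≤ d k) ∧
      (∀ a b, B (v a) (v b) = ∑ k, d k * (U a k * U b k)) ∧
      (∀ k m, 0 ≤ ∑ a, U a k * U a m) := by
  let G : Matrix (Fin L) (Fin L) ℝ := Matrix.of fun a b => B (v a) (v b)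
  have hG : G.PosSemidef := by
    refine Matrix.PosSemidef.of_dotProduct_mulVec_nonneg ?_ ?_
    · ext a b
      simp [G, hsym (v a) (v b)]
    · intro x
      have := hpos (∑ i, x i • v i)
      simp only [map_sum, map_smul, LinearMap.sum_apply, LinearMap.smul_apply, smul_eq_mul] at this
      simp only [dotProduct, Matrix.mulVec, G, Matrix.of_apply, star_trivial]
      refine this.trans_eq (?_)
      rw [Finset.sum_congr rfl fun i _ => Finset.mul_sum _ _ _]
      refine Finset.sum_congr rfl fun i _ => ?_
      rw [Finset.mul_sum]
      refine Finset.sum_congr rfl fun j _ => ?_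
      rw [hsym]; ring
  have hH := hG.1
  refine ⟨hH.eigenvalues, fun a k => (hH.eigenvectorUnitary : Matrix (Fin L) (Fin L) ℝ) a k,
    hG.eigenvalues_nonneg, ?_, ?_⟩
  · intro a b
    have h := congrFun (congrFun hH.spectral_theorem a) b
    change G a b = _
    rw [h, Unitary.conjStarAlgAut_apply, Matrix.mul_apply]
    refine Finset.sum_congr rfl fun k _ => ?_
    rw [Matrix.mul_diagonal]
    simp [Matrix.star_apply]
    ring
  · intro k m
    have h := congrFun (congrFun (Unitary.coe_star_mul_self hH.eigenvectorUnitary) k) m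
    rw [Matrix.mul_apply] at h
    simp only [Matrix.star_apply, star_trivial] at h
    rw [h, Matrix.one_apply]
    split_ifs <;> simp

lemma aux_prod (r : ℕ) (f : Fin (2 * r) → ℝ) (e₀ e₁ : Fin r → Fin (2 * r))
    (h₀ : ∀ i, (e₀ i).1 = 2 * i.1) (h₁ : ∀ i, (e₁ i).1 = 2 * i.1 + 1) :
    ∏ i : Fin r, (f (e₀ i) * f (e₁ i)) = ∏ x, f x := by
  rw [← Finset.prod_fiberwise_of_maps_to (s := univ) (t := (univ : Finset (Fin r)))
    (g := fun x : Fin (2 * r) => (⟨x.1 / 2, by have := x.isLt; omega⟩ : Fin r))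
    (fun _ _ => mem_univ _) f]
  refine Finset.prod_congr rfl fun i _ => ?_
  rw [← Finset.prod_pair (by simp [Fin.ext_iff, h₀, h₁])]
  refine Finset.prod_congr ?_ fun _ _ => rfl
  ext x
  simp [Fin.ext_iff, h₀, h₁]
  omega

lemma aux_sum {n L : ℕ} (P : Finpartition (univ : Finset (Fin n)))
    (f : (Fin n → Fin L) → ℝ) :
    ∑ l ∈ (univ : Finset (Fin n → Fin L)).filter
          (fun l => ∀ i j : Fin n, P.part i = P.part j → l i = l j), f l
    = ∑ m : P.parts → Fin L, f (fun x => m ⟨P.part x, P.part_mem.2 (mem_univ x)⟩) := by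
  symm
  refine Finset.sum_bij (fun m _ => fun x => m ⟨P.part x, P.part_mem.2 (mem_univ x)⟩) ?_ ?_ ?_ ?_
  · intro m _
    simp only [mem_filter, mem_univ, true_and]
    intro i j h
    simp only [h]
  · intro m _ m' _ h
    funext ⟨p, hp⟩
    obtain ⟨x, hx⟩ := P.nonempty_of_mem_parts hp
    have h1 := congrFun h x
    have h2 := P.part_eq_of_mem hp hx
    subst h2
    exact h1
  · intro l hl
    simp only [mem_filter, mem_univ, true_and] at hl
    have hne : ∀ p : P.parts, ∃ x, x ∈ p.1 := fun p => P.nonempty_of_mem_parts p.2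
    choose c hc using hne
    refine ⟨fun p => l (c p), mem_univ _, ?_⟩
    funext x
    apply hl
    exact P.part_eq_of_mem (P.part_mem.2 (mem_univ x)) (hc ⟨P.part x, _⟩)
  · intro _ _
    rfl

/-- For a symmetric positive bilinear form `𝔅` on a real vector space, with the
`2r`-linear form `Λ(u₁,…,u_{2r}) = 𝔅(u₁,u₂)⋯𝔅(u_{2r−1},u_{2r})`, for any
partition `𝒫` of `{1,…,2r}` all of whose blocks have exactly two elements and
any `v₁,…,v_L ∈ V`, `∑_{(l_P)_{P∈𝒫}} Λ(v_{l_{𝒫(1)}},…,v_{l_{𝒫(2r)}}) ≥ 0`.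
The sum over independent block indices is encoded as the sum over all index
tuples `l : Fin (2r) → Fin L` which are constant on the blocks of `𝒫`. -/
theorem stmt8 (V : Type*) [AddCommGroup V] [Module ℝ V]
    (B : V →ₗ[ℝ] V →ₗ[ℝ] ℝ)
    (hsym : ∀ u v : V, B u v = B v u) (hpos : ∀ v : V, 0 ≤ B v v)
    (r : ℕ) (hr : 0 < r)
    (P : Finpartition (univ : Finset (Fin (2 * r))))
    (hP : ∀ t ∈ P.parts, t.card = 2)
    (L : ℕ) (v : Fin L → V) :
    0 ≤ ∑ l ∈ (univ : Finset (Fin (2 * r) → Fin L)).filter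
          (fun l => ∀ i j : Fin (2 * r), P.part i = P.part j → l i = l j),
        ∏ i : Fin r,
          B (v (l ⟨2 * i.1, by have := i.isLt; omega⟩))
            (v (l ⟨2 * i.1 + 1, by have := i.isLt; omega⟩)) := by
  obtain ⟨d, U, hd, hB, hU⟩ := aux_spectral B hsym hpos L v
  rw [aux_sum P (fun l => ∏ i : Fin r,
          B (v (l ⟨2 * i.1, by have := i.isLt; omega⟩))
            (v (l ⟨2 * i.1 + 1, by have := i.isLt; omega⟩)))]
  simp only [hB]
  simp only [Finset.prod_univ_sum, Fintype.piFinset_univ]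
  rw [Finset.sum_comm]
  refine Finset.sum_nonneg fun k _ => ?_
  simp only [Finset.prod_mul_distrib (f := fun i => d (k i))]
  rw [← Finset.mul_sum]
  refine mul_nonneg (Finset.prod_nonneg fun i _ => hd _) ?_
  let q : Fin (2 * r) → Fin r := fun x => ⟨x.1 / 2, by have := x.isLt; omega⟩
  let pt : Fin (2 * r) → P.parts := fun x => ⟨P.part x, P.part_mem.2 (mem_univ x)⟩
  have key : ∀ m : P.parts → Fin L,
      ∏ i : Fin r, (U (m (pt ⟨2 * i.1, by have := i.isLt; omega⟩)) (k i) *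
        U (m (pt ⟨2 * i.1 + 1, by have := i.isLt; omega⟩)) (k i))
      = ∏ p : P.parts, ∏ x ∈ p.1, U (m p) (k (q x)) := by
    intro m
    have h1 := aux_prod r (fun x => U (m (pt x)) (k (q x)))
      (fun i => ⟨2 * i.1, by have := i.isLt; omega⟩)
      (fun i => ⟨2 * i.1 + 1, by have := i.isLt; omega⟩) (fun _ => rfl) (fun _ => rfl)
    have h2 : ∀ i : Fin r, q ⟨2 * i.1, by have := i.isLt; omega⟩ = i := by
      intro i; simp [q]
    have h3 : ∀ i : Fin r, q ⟨2 * i.1 + 1, by have := i.isLt; omega⟩ = i := by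
      intro i; simp only [q, Fin.ext_iff]; omega
    simp only [h2, h3] at h1
    rw [h1, ← Finset.prod_fiberwise_of_maps_to (s := univ) (t := (univ : Finset P.parts))
      (g := pt) (fun _ _ => mem_univ _)]
    refine Finset.prod_congr rfl fun p _ => ?_
    refine Finset.prod_congr ?_ ?_
    · ext x
      simp only [mem_filter, mem_univ, true_and, pt, Subtype.ext_iff]
      exact P.part_eq_iff_mem p.2
    · intro x hx
      have : pt x = p := Subtype.ext (P.part_eq_of_mem p.2 hx)
      rw [this]
  rw [Finset.sum_congr rfl fun m _ => key m]
  have h4 := Finset.prod_univ_sum (fun _ : P.parts => (univ : Finset (Fin L)))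
    (fun p a => ∏ x ∈ p.1, U a (k (q x)))
  rw [Fintype.piFinset_univ] at h4
  rw [← h4]
  refine Finset.prod_nonneg fun p _ => ?_
  obtain ⟨x, y, hxy, hp⟩ := Finset.card_eq_two.1 (hP p.1 p.2)
  simp only [hp, Finset.prod_pair hxy]
  exact hU _ _
end

section
/- Let (X, μ) be a σ-finite measure space, r ∈ ℕ₊, and V a real vector space with a symmetric positive bilinear form 𝔅; write 𝔅(v) := 𝔅(v,v)^{1/2}. Let f₁,…,f_L : X → V be such that all products 𝔅(f_{l₁}, f_{l₂})⋯𝔅(f_{l_{2r−1}}, f_{l_{2r}}) are measurable and integrable, and suppose ∫_X 𝔅(f_{l₁},f_{l₂})⋯𝔅(f_{l_{2r−1}},f_{l_{2r}}) dμ = 0 whenever l₁,…,l_{2r} are pairwise distinct. Then ‖𝔅(∑_{l=1}^L f_l)‖_{L^{2r}(X)} ≤ C_r ‖(∑_{l=1}^L 𝔅(f_l)²)^{1/2}‖_{L^{2r}(X)}, with a constant C_r depending only on r. -/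
open Finset MeasureTheory

theorem aux_pow_sum {α : Type*} [Fintype α] (a : α → ℝ) (ha : ∀ i, 0 ≤ a i) (k : ℕ) (hk : 2 ≤ k) :
    ∑ i, a i ^ k ≤ Real.sqrt (∑ i, a i ^ 2) ^ k := by
  obtain ⟨j, rfl⟩ := Nat.exists_eq_add_of_le hk
  have h0 : 0 ≤ ∑ i, a i ^ 2 := Finset.sum_nonneg fun i _ => sq_nonneg _
  rw [pow_add, Real.sq_sqrt h0, Finset.sum_mul]
  refine Finset.sum_le_sum fun i _ => ?_
  rw [pow_add]
  refine mul_le_mul_of_nonneg_left ?_ (sq_nonneg _)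
  refine pow_le_pow_left₀ (ha i) ?_ _
  refine Real.le_sqrt_of_sq_le ?_
  exact Finset.single_le_sum (f := fun i => a i ^ 2) (fun i _ => sq_nonneg _) (Finset.mem_univ i)

open Classical in
/-- Index maps that are constant along the relation `R`. -/
noncomputable def auxComp {κ : Type*} (α : Type*) [Fintype κ] [DecidableEq κ] [Fintype α]
    (R : κ → κ → Prop) : Finset (κ → α) :=
  Finset.univ.filter fun l => ∀ i j, R i j → l i = l j

theorem mem_auxComp {κ α : Type*} [Fintype κ] [DecidableEq κ] [Fintype α]
    (R : κ → κ → Prop) (l : κ → α) : l ∈ auxComp α R ↔ ∀ i j, R i j → l i = l j := by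
  simp [auxComp]

open Classical in
/-- Injective index maps. -/
noncomputable def auxInj (ι α : Type*) [Fintype ι] [DecidableEq ι] [Fintype α] : Finset (ι → α) :=
  Finset.univ.filter fun l => Function.Injective l

theorem mem_auxInj {ι α : Type*} [Fintype ι] [DecidableEq ι] [Fintype α] (l : ι → α) :
    l ∈ auxInj ι α ↔ Function.Injective l := by
  simp [auxInj]

open Classical in
theorem aux_compat {κ α : Type*} [Fintype κ] [DecidableEq κ] [Fintype α] (R : κ → κ → Prop)
    (hR : ∀ i, ∃ j, j ≠ i ∧ (R i j ∨ R j i)) (a : α → ℝ) (ha : ∀ i, 0 ≤ a i) (G : ℝ)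
    (hG : ∀ k, 2 ≤ k → ∑ i, a i ^ k ≤ G ^ k) :
    ∑ l ∈ auxComp α R, ∏ i, a (l i) ≤ G ^ Fintype.card κ := by
  have : Fintype (Quot R) := Fintype.ofFinite _
  have h1 : ∑ l ∈ auxComp α R, ∏ i, a (l i)
      ≤ ∑ m : Quot R → α, ∏ i, a (m (Quot.mk R i)) := by
    have hinj : Function.Injective (fun (m : Quot R → α) (i : κ) => m (Quot.mk R i)) := by
      intro m m' h
      funext c
      induction c using Quot.ind with
      | mk i => exact congrFun h i
    rw [← Finset.sum_image (s := Finset.univ) (g := fun (m : Quot R → α) (i : κ) => m (Quot.mk R i))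
      (f := fun l : κ → α => ∏ i, a (l i)) (hinj.injOn)]
    refine Finset.sum_le_sum_of_subset_of_nonneg ?_ fun l _ _ => Finset.prod_nonneg fun i _ => ha _
    intro l hl
    rw [mem_auxComp] at hl
    simp only [Finset.mem_image, Finset.mem_univ, true_and]
    exact ⟨Quot.lift l hl, rfl⟩
  refine h1.trans ?_
  have h2 : ∀ m : Quot R → α, ∏ i, a (m (Quot.mk R i))
      = ∏ c, a (m c) ^ (#{i | Quot.mk R i = c}) := by
    intro m
    rw [← Finset.prod_fiberwise (s := Finset.univ) (g := fun i => Quot.mk R i)]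
    refine Finset.prod_congr rfl fun c _ => ?_
    rw [Finset.prod_congr rfl (g := fun _ => a (m c)), Finset.prod_const]
    intro i hi
    rw [(Finset.mem_filter.1 hi).2]
  simp_rw [h2]
  have h3 := Finset.prod_univ_sum (fun _ : Quot R => (Finset.univ : Finset α))
    (fun c x => a x ^ (#{i | Quot.mk R i = c}))
  rw [Fintype.piFinset_univ] at h3
  rw [← h3]
  calc _ ≤ ∏ c : Quot R, G ^ (#{i | Quot.mk R i = c}) := by
        refine Finset.prod_le_prod (fun c _ => Finset.sum_nonneg fun x _ => pow_nonneg (ha x) _) ?_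
        intro c _
        apply hG
        induction c using Quot.ind with
        | mk i =>
          obtain ⟨j, hj, h⟩ := hR i
          change 1 < _
          rw [Finset.one_lt_card]
          refine ⟨i, by simp, j, ?_, hj.symm⟩
          simp only [Finset.mem_filter, Finset.mem_univ, true_and]
          rcases h with h | h
          · exact (Quot.sound h).symm
          · exact Quot.sound h
    _ = G ^ Fintype.card κ := by
        rw [Finset.prod_pow_eq_pow_sum]
        congr 1
        exact (Finset.card_eq_sum_card_fiberwise (fun i _ => Finset.mem_univ (Quot.mk R i))).symm

/-- The product of the bilinear forms as a multilinear map. -/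
noncomputable def auxPhi {V : Type*} [AddCommGroup V] [Module ℝ V] (r : ℕ) (B : V →ₗ[ℝ] V →ₗ[ℝ] ℝ) :
    MultilinearMap ℝ (fun _ : Fin r × Bool => V) ℝ :=
  MultilinearMap.mk' (fun v => ∏ i, B (v (i, false)) (v (i, true)))
    (by
      rintro v ⟨i, b⟩ x y
      simp only [Fintype.prod_eq_mul_prod_compl i]
      have h : ∀ z, ∏ j ∈ {i}ᶜ, B (Function.update v (i, b) z (j, false))
          (Function.update v (i, b) z (j, true)) = ∏ j ∈ {i}ᶜ, B (v (j, false)) (v (j, true)) := by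
        intro z
        refine Finset.prod_congr rfl fun j hj => ?_
        have hj' : j ≠ i := by simpa using hj
        rw [Function.update_of_ne (by simp [hj']), Function.update_of_ne (by simp [hj'])]
      simp only [h, ← add_mul]
      congr 1
      cases b <;> simp [Function.update_of_ne])
    (by
      rintro v ⟨i, b⟩ c x
      simp only [Fintype.prod_eq_mul_prod_compl i]
      have h : ∀ z, ∏ j ∈ {i}ᶜ, B (Function.update v (i, b) z (j, false))
          (Function.update v (i, b) z (j, true)) = ∏ j ∈ {i}ᶜ, B (v (j, false)) (v (j, true)) := by
        intro z
        refine Finset.prod_congr rfl fun j hj => ?_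
        have hj' : j ≠ i := by simpa using hj
        rw [Function.update_of_ne (by simp [hj']), Function.update_of_ne (by simp [hj'])]
      simp only [h, smul_eq_mul, ← mul_assoc]
      congr 1
      cases b <;> simp [Function.update_of_ne])

theorem auxPhi_apply {V : Type*} [AddCommGroup V] [Module ℝ V] (r : ℕ) (B : V →ₗ[ℝ] V →ₗ[ℝ] ℝ)
    (v : Fin r × Bool → V) : auxPhi r B v = ∏ i, B (v (i, false)) (v (i, true)) := rfl

theorem aux_cs {V : Type*} [AddCommGroup V] [Module ℝ V] (B : V →ₗ[ℝ] V →ₗ[ℝ] ℝ)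
    (hs : ∀ u v : V, B u v = B v u) (hp : ∀ v : V, 0 ≤ B v v) (u v : V) :
    |B u v| ≤ Real.sqrt (B u u) * Real.sqrt (B v v) := by
  rw [← Real.sqrt_mul (hp u)]
  refine Real.le_sqrt_of_sq_le ?_
  rw [sq_abs]
  have h : ∀ t : ℝ, 0 ≤ B v v * (t * t) + (2 * B u v) * t + B u u := by
    intro t
    have := hp (u + t • v)
    simp only [map_add, map_smul, LinearMap.add_apply, LinearMap.smul_apply, smul_eq_mul,
      hs v u] at this
    linarith
  have := discrim_le_zero h
  unfold discrim at this
  nlinarith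

theorem auxPhi_le {V : Type*} [AddCommGroup V] [Module ℝ V] (r : ℕ) (B : V →ₗ[ℝ] V →ₗ[ℝ] ℝ)
    (hs : ∀ u v : V, B u v = B v u) (hp : ∀ v : V, 0 ≤ B v v) (v : Fin r × Bool → V) :
    |auxPhi r B v| ≤ ∏ i, Real.sqrt (B (v i) (v i)) := by
  rw [auxPhi_apply, Finset.abs_prod, Fintype.prod_prod_type]
  refine Finset.prod_le_prod (fun _ _ => abs_nonneg _) fun i _ => ?_
  rw [Fintype.prod_bool, mul_comm]
  exact aux_cs B hs hp _ _

theorem aux_young (n s : ℕ) (hs : s < n) (N G K : ℝ) (hN : 0 ≤ N) (hG : 0 ≤ G) (hK : 1 ≤ K) :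
    N ^ s * G ^ (n - s) ≤ N ^ n / K + K ^ n * G ^ n := by
  have hK0 : 0 < K := by linarith
  rcases le_total N (K * G) with h | h
  · have : N ^ s * G ^ (n - s) ≤ K ^ n * G ^ n := by
      calc N ^ s * G ^ (n - s) ≤ (K * G) ^ s * G ^ (n - s) := by gcongr
        _ = K ^ s * G ^ n := by
          rw [mul_pow, mul_assoc, ← pow_add, Nat.add_sub_cancel' hs.le]
        _ ≤ K ^ n * G ^ n := by
          gcongr
    have : 0 ≤ N ^ n / K := by positivity
    linarith
  · have h1 : N ^ s * G ^ (n - s) ≤ N ^ n / K := by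
      rw [le_div_iff₀ hK0]
      obtain ⟨m, rfl⟩ : ∃ m, n = s + (m + 1) := ⟨n - s - 1, by omega⟩
      have hGN : G ≤ N := by nlinarith
      rw [Nat.add_sub_cancel_left, pow_add N s (m + 1), mul_assoc]
      refine mul_le_mul_of_nonneg_left ?_ (by positivity)
      calc G ^ (m + 1) * K = G ^ m * (K * G) := by ring
        _ ≤ N ^ m * N := by gcongr
        _ = N ^ (m + 1) := by ring
    have : 0 ≤ K ^ n * G ^ n := by positivity
    linarith

open Classical in
theorem aux_SE {ι α V : Type*} [Fintype ι] [DecidableEq ι] [Fintype α] [AddCommGroup V] [Module ℝ V]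
    (Φ : MultilinearMap ℝ (fun _ : ι => V) ℝ) (w : V → ℝ) (hw : ∀ v, 0 ≤ w v)
    (hΦ : ∀ v, |Φ v| ≤ ∏ i, w (v i)) (f : α → V) (G : ℝ)
    (hG : ∀ k, 2 ≤ k → ∑ i, w (f i) ^ k ≤ G ^ k) (E : ι → ι → Prop)
    (T : ι → Prop) (hT : ∀ i, ¬ T i ↔ ∃ j, j ≠ i ∧ (E i j ∨ E j i)) (hE : ∀ i j, E i j → i ≠ j) :
    |∑ l ∈ auxComp α E, Φ (fun i => f (l i))|
      ≤ w (∑ a, f a) ^ Fintype.card {i // T i} * G ^ Fintype.card {i // ¬ T i} := by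
  have hT1 : ∀ i j, E i j → ¬ T i ∧ ¬ T j := fun i j h =>
    ⟨(hT i).2 ⟨j, (hE i j h).symm, Or.inl h⟩, (hT j).2 ⟨i, hE i j h, Or.inr h⟩⟩
  let P : ({i // ¬ T i} → α) → Prop := fun l' => ∀ i j : {i // ¬ T i}, E i j → l' i = l' j
  have hP : ∀ l : ι → α, (∀ i j, E i j → l i = l j) ↔ P (fun i => l i) := by
    intro l
    constructor
    · intro h i j hij
      exact h i j hij
    · intro h i j hij
      exact h ⟨i, (hT1 i j hij).1⟩ ⟨j, (hT1 i j hij).2⟩ hij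
  have h1 : ∑ l ∈ auxComp α E, Φ (fun i => f (l i))
      = ∑ l' ∈ auxComp α (fun i j : {i // ¬ T i} => E i j),
          Φ (fun i => if h : T i then ∑ a, f a else f (l' ⟨i, h⟩)) := by
    rw [← Finset.sum_fiberwise (s := auxComp α E)
      (g := fun (l : ι → α) (i : {i // ¬ T i}) => l i), auxComp, auxComp, Finset.sum_filter]
    refine Finset.sum_congr rfl fun l' _ => ?_
    rw [Finset.filter_filter]
    split_ifs with hl'
    · have h2 := Φ.map_sum_finset (fun _ a => f a)
        (fun i => if h : T i then Finset.univ else {l' ⟨i, h⟩})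
      have h3 : (fun i => ∑ j ∈ (if h : T i then Finset.univ else {l' ⟨i, h⟩}), f j)
          = (fun i => if h : T i then ∑ a, f a else f (l' ⟨i, h⟩)) := by
        funext i
        split_ifs <;> simp
      rw [h3] at h2
      rw [h2]
      refine Finset.sum_congr ?_ fun _ _ => rfl
      ext l
      simp only [Finset.mem_filter, Finset.mem_univ, true_and, Fintype.mem_piFinset]
      constructor
      · rintro ⟨-, h⟩ i
        split_ifs with hi
        · simp
        · simp [← h]
      · intro h
        have : (fun i : {i // ¬ T i} => l i) = l' := by
          funext i
          have := h i
          rw [dif_neg i.2] at this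
          simpa using this
        refine ⟨?_, this⟩
        rw [hP, this]
        exact hl'
    · refine Finset.sum_eq_zero ?_
      intro l hl
      simp only [Finset.mem_filter, Finset.mem_univ, true_and] at hl
      exact absurd (hl.2 ▸ (hP l).1 hl.1) hl'
  rw [h1]
  refine (Finset.abs_sum_le_sum_abs _ _).trans ?_
  have h4 : ∀ l' : {i // ¬ T i} → α, |Φ (fun i => if h : T i then ∑ a, f a else f (l' ⟨i, h⟩))|
      ≤ w (∑ a, f a) ^ Fintype.card {i // T i} * ∏ i, w (f (l' i)) := by
    intro l'
    refine (hΦ _).trans (le_of_eq ?_)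
    rw [← Fintype.prod_subtype_mul_prod_subtype T]
    congr 1
    · rw [Finset.prod_congr rfl (g := fun _ => w (∑ a, f a)), Finset.prod_const, Finset.card_univ]
      intro i _
      rw [dif_pos i.2]
    · refine Finset.prod_congr rfl fun i _ => ?_
      rw [dif_neg i.2]
  refine (Finset.sum_le_sum fun l' _ => h4 l').trans ?_
  rw [← Finset.mul_sum]
  refine mul_le_mul_of_nonneg_left ?_ (pow_nonneg (hw _) _)
  refine aux_compat (fun i j : {i // ¬ T i} => E i j) ?_ (fun a => w (f a)) (fun a => hw _) G hG
  intro i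
  obtain ⟨j, hj, h⟩ := (hT i).1 i.2
  refine ⟨⟨j, (hT j).2 ⟨i, hj.symm, h.symm⟩⟩, ?_, h⟩
  intro h'
  exact hj (congrArg Subtype.val h')

open Classical in
theorem aux_incl {ι α : Type*} [Fintype ι] [DecidableEq ι] [Fintype α] (φ : (ι → α) → ℝ) :
    ∑ l ∈ auxInj ι α, φ l
      = ∑ E ∈ (Finset.univ.offDiag : Finset (ι × ι)).powerset,
        (-1) ^ #E * ∑ l ∈ auxComp α (fun i j => (i, j) ∈ E), φ l := by
  have h : ∀ l : ι → α, (if Function.Injective l then φ l else 0)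
      = ∑ E ∈ (Finset.univ.offDiag : Finset (ι × ι)).powerset,
        (-1) ^ #E * (if (∀ i j, (i, j) ∈ E → l i = l j) then φ l else 0) := by
    intro l
    have h1 := Finset.prod_one_add (f := fun p : ι × ι => -(if l p.1 = l p.2 then (1 : ℝ) else 0))
      (Finset.univ.offDiag : Finset (ι × ι))
    have h2 : ∀ E : Finset (ι × ι), ∏ p ∈ E, -(if l p.1 = l p.2 then (1 : ℝ) else 0)
        = (-1) ^ #E * (if (∀ i j, (i, j) ∈ E → l i = l j) then 1 else 0) := by
      intro E
      rw [Finset.prod_neg]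
      congr 1
      split_ifs with hE
      · refine Finset.prod_eq_one fun p hp => ?_
        rw [if_pos (hE p.1 p.2 hp)]
      · push Not at hE
        obtain ⟨i, j, hij, hne⟩ := hE
        exact Finset.prod_eq_zero hij (if_neg hne)
    simp only [h2] at h1
    have h3 : ∏ p ∈ (Finset.univ.offDiag : Finset (ι × ι)),
        (1 + -(if l p.1 = l p.2 then (1 : ℝ) else 0)) = if Function.Injective l then 1 else 0 := by
      split_ifs with hl
      · refine Finset.prod_eq_one fun p hp => ?_
        rw [Finset.mem_offDiag] at hp
        rw [if_neg (hl.ne hp.2.2)]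
        simp
      · unfold Function.Injective at hl
        push Not at hl
        obtain ⟨i, j, hij, hne⟩ := hl
        refine Finset.prod_eq_zero (i := (i, j)) (by simp [hne]) ?_
        simp [hij]
    rw [h3] at h1
    calc (if Function.Injective l then φ l else 0)
        = (if Function.Injective l then 1 else 0) * φ l := by split_ifs <;> simp
      _ = _ := by
        rw [h1, Finset.sum_mul]
        refine Finset.sum_congr rfl fun E _ => ?_
        rw [mul_assoc]
        congr 1
        split_ifs <;> simp
  rw [auxInj, Finset.sum_filter, Finset.sum_congr rfl fun l _ => h l, Finset.sum_comm]
  refine Finset.sum_congr rfl fun E _ => ?_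
  rw [← Finset.mul_sum, auxComp, Finset.sum_filter]
  congr! 3

open Classical in
theorem aux_pointwise {ι α V : Type*} [Fintype ι] [DecidableEq ι] [Fintype α] [AddCommGroup V] [Module ℝ V]
    (Φ : MultilinearMap ℝ (fun _ : ι => V) ℝ) (w : V → ℝ) (hw : ∀ v, 0 ≤ w v)
    (hΦ : ∀ v, |Φ v| ≤ ∏ i, w (v i)) (f : α → V) (M : ℝ)
    (hM : M = 2 ^ #(Finset.univ.offDiag : Finset (ι × ι))) :
    Φ (fun _ => ∑ a, f a) ≤ ∑ l ∈ auxInj ι α, Φ (fun i => f (l i))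
      + (w (∑ a, f a) ^ Fintype.card ι / 2 + M * (2 * M) ^ Fintype.card ι
          * Real.sqrt (∑ a, w (f a) ^ 2) ^ Fintype.card ι) := by
  set n := Fintype.card ι
  set N := w (∑ a, f a)
  set G := Real.sqrt (∑ a, w (f a) ^ 2)
  have hM1 : 1 ≤ M := by
    rw [hM]; exact one_le_pow₀ (by norm_num)
  have hN : 0 ≤ N := hw _
  have hG0 : 0 ≤ G := Real.sqrt_nonneg _
  rw [aux_incl, ← Finset.sum_erase_add _ _ (Finset.empty_mem_powerset _)]
  have h0 : (-1 : ℝ) ^ #(∅ : Finset (ι × ι)) * ∑ l ∈ auxComp α (fun i j => (i, j) ∈ (∅ : Finset (ι × ι))), Φ (fun i => f (l i))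
      = Φ (fun _ => ∑ a, f a) := by
    rw [Φ.map_sum]
    simp [auxComp]
  rw [h0]
  set Y : ℝ := N ^ n / (2 * M) + (2 * M) ^ n * G ^ n with hY
  have hY0 : 0 ≤ Y := by positivity
  have h1 : ∀ E ∈ ((Finset.univ.offDiag : Finset (ι × ι)).powerset).erase ∅,
      -Y ≤ (-1 : ℝ) ^ #E * ∑ l ∈ auxComp α (fun i j => (i, j) ∈ E), Φ (fun i => f (l i)) := by
    intro E hE
    rw [Finset.mem_erase, Finset.mem_powerset] at hE
    obtain ⟨hne, hsub⟩ := hE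
    refine (abs_le.1 ?_).1
    rw [abs_mul, abs_pow, abs_neg, abs_one, one_pow, one_mul]
    have hirr : ∀ i j, (i, j) ∈ E → i ≠ j := fun i j h => (Finset.mem_offDiag.1 (hsub h)).2.2
    obtain ⟨T, hT⟩ : ∃ T : ι → Prop, ∀ i, ¬ T i ↔ ∃ j, j ≠ i ∧ ((i, j) ∈ E ∨ (j, i) ∈ E) :=
      ⟨fun i => ¬ ∃ j, j ≠ i ∧ ((i, j) ∈ E ∨ (j, i) ∈ E), fun i => not_not⟩
    refine (aux_SE Φ w hw hΦ f G (fun k hk => aux_pow_sum _ (fun a => hw _) k hk)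
      (fun i j => (i, j) ∈ E) T hT hirr).trans ?_
    have hlt : Fintype.card {i // T i} < n := by
      obtain ⟨⟨i, j⟩, hij⟩ := Finset.nonempty_iff_ne_empty.2 hne
      refine Fintype.card_subtype_lt (x := i) ?_
      exact (hT i).2 ⟨j, (hirr i j hij).symm, Or.inl hij⟩
    rw [Fintype.card_subtype_compl T]
    exact aux_young n _ hlt N G (2 * M) hN hG0 (by linarith)
  have h2 := Finset.card_nsmul_le_sum _ _ _ h1
  have hc : (#(((Finset.univ.offDiag : Finset (ι × ι)).powerset).erase ∅) : ℝ) ≤ M := by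
    rw [hM]
    have := Finset.card_le_card (Finset.erase_subset ∅ ((Finset.univ.offDiag : Finset (ι × ι)).powerset))
    rw [Finset.card_powerset] at this
    exact_mod_cast this
  rw [nsmul_eq_mul] at h2
  have h3 : M * Y = N ^ n / 2 + M * (2 * M) ^ n * G ^ n := by
    rw [hY]
    field_simp
  have h4 := mul_le_mul_of_nonneg_right hc hY0
  linarith

/-- Pairs `(i, b)` enumerate `Fin (2 * r)`. -/
def auxEquiv (r : ℕ) : Fin r × Bool ≃ Fin (2 * r) where
  toFun p := ⟨2 * p.1.1 + (if p.2 then 1 else 0), by have := p.1.isLt; split_ifs <;> omega⟩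
  invFun k := (⟨k.1 / 2, by have := k.isLt; omega⟩, decide (k.1 % 2 = 1))
  left_inv := by
    rintro ⟨⟨i, hi⟩, b⟩
    cases b <;> simp <;> omega
  right_inv := by
    rintro ⟨k, hk⟩
    simp only [decide_eq_true_eq, Fin.mk.injEq]
    split_ifs <;> omega

theorem aux_main (r : ℕ) (hr : 0 < r) : ∃ D : ℝ, 0 < D ∧
      ∀ (X : Type*) [MeasurableSpace X] (μ : Measure X)
        (V : Type*) [AddCommGroup V] [Module ℝ V]
        (B : V →ₗ[ℝ] V →ₗ[ℝ] ℝ),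
        (∀ u v : V, B u v = B v u) → (∀ v : V, 0 ≤ B v v) →
        ∀ (L : ℕ) (f : Fin L → X → V),
        (∀ l : Fin r × Bool → Fin L, Integrable (fun x => auxPhi r B (fun i => f (l i) x)) μ) →
        (∀ l : Fin r × Bool → Fin L, Function.Injective l →
          ∫ x, auxPhi r B (fun i => f (l i) x) ∂μ = 0) →
        ∫ x, Real.sqrt (B (∑ l : Fin L, f l x) (∑ l : Fin L, f l x)) ^ (2 * r) ∂μ
          ≤ D * ∫ x, (∑ l : Fin L, Real.sqrt (B (f l x) (f l x)) ^ 2) ^ r ∂μ := by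
  classical
  obtain ⟨M, hM⟩ : ∃ M : ℝ, M = 2 ^ #(Finset.univ.offDiag : Finset ((Fin r × Bool) × (Fin r × Bool))) :=
    ⟨_, rfl⟩
  have hM0 : 0 < M := by rw [hM]; positivity
  refine ⟨2 * (M * (2 * M) ^ (2 * r)), by positivity, ?_⟩
  intro X _ μ V _ _ B hs hp L f hint hzero
  have hcard : Fintype.card (Fin r × Bool) = 2 * r := by simp [mul_comm]
  -- the two sides as sums of products
  have hN : ∀ x, Real.sqrt (B (∑ l : Fin L, f l x) (∑ l : Fin L, f l x)) ^ (2 * r)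
      = auxPhi r B (fun _ => ∑ l, f l x) := by
    intro x
    rw [auxPhi_apply, pow_mul, Real.sq_sqrt (hp _)]
    simp
  have hNint : Integrable
      (fun x => Real.sqrt (B (∑ l : Fin L, f l x) (∑ l : Fin L, f l x)) ^ (2 * r)) μ := by
    simp only [hN]
    have : ∀ x, auxPhi r B (fun _ => ∑ l, f l x)
        = ∑ l : Fin r × Bool → Fin L, auxPhi r B (fun i => f (l i) x) := fun x =>
      MultilinearMap.map_sum _ _
    simp only [this]
    exact integrable_finsetSum _ fun l _ => hint l
  have hGeq : ∀ x, (∑ l : Fin L, Real.sqrt (B (f l x) (f l x)) ^ 2) ^ r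
      = ∑ m : Fin r → Fin L, auxPhi r B (fun i => f (m i.1) x) := by
    intro x
    simp only [auxPhi_apply, Real.sq_sqrt (hp _)]
    rw [← Fintype.piFinset_univ, ← Finset.prod_univ_sum (fun _ : Fin r => (Finset.univ : Finset (Fin L)))
      (fun _ l => B (f l x) (f l x))]
    simp
  have hGint : Integrable (fun x => (∑ l : Fin L, Real.sqrt (B (f l x) (f l x)) ^ 2) ^ r) μ := by
    simp only [hGeq]
    exact integrable_finsetSum _ fun m _ => hint fun i => m i.1
  have hG : ∀ x, Real.sqrt (∑ l : Fin L, Real.sqrt (B (f l x) (f l x)) ^ 2) ^ (2 * r)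
      = (∑ l : Fin L, Real.sqrt (B (f l x) (f l x)) ^ 2) ^ r := by
    intro x
    rw [pow_mul, Real.sq_sqrt (Finset.sum_nonneg fun l _ => sq_nonneg _)]
  have hpt := fun x => aux_pointwise (auxPhi r B) (fun v => Real.sqrt (B v v))
    (fun v => Real.sqrt_nonneg _) (auxPhi_le r B hs hp) (fun l => f l x) M hM
  simp only [hcard, hG, ← hN] at hpt
  have hJint : Integrable (fun x => ∑ l ∈ auxInj (Fin r × Bool) (Fin L),
      auxPhi r B (fun i => f (l i) x)) μ := integrable_finsetSum _ fun l _ => hint l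
  have hJ : ∫ x, ∑ l ∈ auxInj (Fin r × Bool) (Fin L),
      auxPhi r B (fun i => f (l i) x) ∂μ = 0 := by
    rw [integral_finsetSum _ fun l _ => hint l]
    exact Finset.sum_eq_zero fun l hl => hzero l ((mem_auxInj l).1 hl)
  have hfin := integral_mono hNint
    (hJint.add ((hNint.div_const 2).add (hGint.const_mul (M * (2 * M) ^ (2 * r))))) hpt
  rw [integral_add' hJint ((hNint.div_const 2).add (hGint.const_mul _)), hJ] at hfin
  rw [integral_add' (hNint.div_const 2) (hGint.const_mul _), integral_div, integral_const_mul] at hfin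
  linarith

/-- Vector-valued direct inequality for type IV superorthogonality: for each
`r ≥ 1` there is a constant `C_r > 0` such that for any σ-finite measure space
`(X,μ)`, any real vector space `V` with a symmetric positive bilinear form `𝔅`
(write `𝔅(v) := 𝔅(v,v)^{1/2}`), and any `f₁,…,f_L : X → V` making all products
`𝔅(f_{l₁},f_{l₂})⋯𝔅(f_{l_{2r−1}},f_{l_{2r}})` measurable and integrable and
satisfying `∫ 𝔅(f_{l₁},f_{l₂})⋯𝔅(f_{l_{2r−1}},f_{l_{2r}}) dμ = 0` whenever
`l₁,…,l_{2r}` are pairwise distinct, one has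
`‖𝔅(∑ f_l)‖_{L^{2r}} ≤ C_r ‖(∑ 𝔅(f_l)²)^{1/2}‖_{L^{2r}}`. -/
theorem stmt13 (r : ℕ) (hr : 0 < r) :
    ∃ C : ℝ, 0 < C ∧
      ∀ (X : Type u) [MeasurableSpace X] (μ : Measure X) [SigmaFinite μ]
        (V : Type v) [AddCommGroup V] [Module ℝ V]
        (B : V →ₗ[ℝ] V →ₗ[ℝ] ℝ),
        (∀ u v : V, B u v = B v u) → (∀ v : V, 0 ≤ B v v) →
        ∀ (L : ℕ) (f : Fin L → X → V),
        (∀ l : Fin (2 * r) → Fin L,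
          Measurable (fun x =>
            ∏ i : Fin r, B (f (l ⟨2 * i.1, by have := i.isLt; omega⟩) x)
              (f (l ⟨2 * i.1 + 1, by have := i.isLt; omega⟩) x))) →
        (∀ l : Fin (2 * r) → Fin L,
          Integrable (fun x =>
            ∏ i : Fin r, B (f (l ⟨2 * i.1, by have := i.isLt; omega⟩) x)
              (f (l ⟨2 * i.1 + 1, by have := i.isLt; omega⟩) x)) μ) →
        (∀ l : Fin (2 * r) → Fin L, Function.Injective l →
          ∫ x, (∏ i : Fin r, B (f (l ⟨2 * i.1, by have := i.isLt; omega⟩) x)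
              (f (l ⟨2 * i.1 + 1, by have := i.isLt; omega⟩) x)) ∂μ = 0) →
        (∫ x, Real.sqrt (B (∑ l : Fin L, f l x) (∑ l : Fin L, f l x)) ^ (2 * r) ∂μ)
            ^ (1 / (2 * r : ℝ))
          ≤ C * (∫ x, (∑ l : Fin L, Real.sqrt (B (f l x) (f l x)) ^ 2) ^ r ∂μ)
            ^ (1 / (2 * r : ℝ)) := by
  obtain ⟨D, hD, h⟩ := aux_main r hr
  refine ⟨D ^ (1 / (2 * r : ℝ)), by positivity, ?_⟩
  intro X _ μ _ V _ _ B hs hp L f _ hint hzero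
  have hphi : ∀ (l : Fin r × Bool → Fin L) (x : X), auxPhi r B (fun i => f (l i) x)
      = ∏ i : Fin r, B (f ((l ∘ (auxEquiv r).symm) ⟨2 * i.1, by have := i.isLt; omega⟩) x)
        (f ((l ∘ (auxEquiv r).symm) ⟨2 * i.1 + 1, by have := i.isLt; omega⟩) x) := by
    intro l x
    rw [auxPhi_apply]
    refine Finset.prod_congr rfl fun i _ => ?_
    have h1 : (auxEquiv r).symm ⟨2 * i.1, by have := i.isLt; omega⟩ = (i, false) := by
      rw [Equiv.symm_apply_eq]; simp [auxEquiv]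
    have h2 : (auxEquiv r).symm ⟨2 * i.1 + 1, by have := i.isLt; omega⟩ = (i, true) := by
      rw [Equiv.symm_apply_eq]; simp [auxEquiv]
    simp only [Function.comp_apply, h1, h2]
  have hmain := h X μ V B hs hp L f
    (fun l => by simp only [hphi]; exact hint (l ∘ (auxEquiv r).symm))
    (fun l hl => by
      simp only [hphi]
      exact hzero (l ∘ (auxEquiv r).symm) (hl.comp (auxEquiv r).symm.injective))
  rw [← Real.mul_rpow hD.le (integral_nonneg fun x => by positivity)]
  exact Real.rpow_le_rpow (integral_nonneg fun x => by positivity) hmain (by positivity)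
end

section
/- Let (X, μ) be a σ-finite measure space, r ∈ ℕ₊, and V a real vector space with a symmetric positive bilinear form 𝔅; write 𝔅(v) := 𝔅(v,v)^{1/2}. Let f₁,…,f_L : X → V satisfy the measurability/integrability conditions and the type IV superorthogonality ∫_X 𝔅(f_{l₁},f_{l₂})⋯𝔅(f_{l_{2r−1}},f_{l_{2r}}) dμ = 0 whenever l₁,…,l_{2r} are pairwise distinct. If moreover ‖(∑_{l=1}^L 𝔅(f_l)^{2r})^{1/(2r)}‖_{L^{2r}} ≤ A ‖𝔅(∑_{l=1}^L f_l)‖_{L^{2r}} for some constant A, then ‖(∑_{l=1}^L 𝔅(f_l)²)^{1/2}‖_{L^{2r}} ≤ C_{r,A} ‖𝔅(∑_{l=1}^L f_l)‖_{L^{2r}} with a constant depending only on r and A. -/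
open Finset MeasureTheory

/-- `l` is constant on the classes of `s`. -/
def soCons {P J : Type*} (s : Setoid P) (l : P → J) : Prop := ∀ p q, s p q → l p = l q

open Classical in
lemma so_fact {P J : Type*} [Fintype P] [DecidableEq P] [Fintype J] (s : Setoid P) (g : P → J → ℝ) :
    ∑ l : P → J with soCons s l, ∏ p, g p (l p)
      = ∏ q : Quotient s, ∑ j, ∏ p with (Quotient.mk s p = q), g p j := by
  rw [Finset.prod_univ_sum]
  symm
  refine Finset.sum_bij (fun m _ => fun p => m (Quotient.mk s p)) ?_ ?_ ?_ ?_
  · intro m _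
    simp only [mem_filter, mem_univ, true_and]
    intro p q h
    exact congrArg m (Quotient.sound h)
  · intro m _ m' _ h
    funext q
    induction q using Quotient.inductionOn with
    | h p => exact congrFun h p
  · intro l hl
    simp only [mem_filter, mem_univ, true_and] at hl
    exact ⟨Quotient.lift l hl, by simp, rfl⟩
  · intro m _
    rw [← Finset.prod_fiberwise (s := univ) (g := fun p => Quotient.mk s p)]
    refine Finset.prod_congr rfl fun q _ => Finset.prod_congr rfl fun p hp => ?_
    simp only [mem_filter, mem_univ, true_and] at hp
    simp only [hp]

lemma so_interp (n k : ℕ) (hk : 1 ≤ k) (hkn : k ≤ n) (ε y S : ℝ) (hε : 0 < ε) (hε1 : ε ≤ 1)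
    (hy : 0 ≤ y) (hS : 0 ≤ S) : y ^ k * S ^ (n - k) ≤ ε * S ^ n + (ε⁻¹) ^ n * y ^ n := by
  have e1 : 0 ≤ ε * S ^ n := by positivity
  have e2 : 0 ≤ (ε⁻¹) ^ n * y ^ n := by positivity
  rcases le_total y (ε * S) with h | h
  · have : y ^ k * S ^ (n - k) ≤ ε * S ^ n := by
      calc y ^ k * S ^ (n - k) ≤ (ε * S) ^ k * S ^ (n - k) := by gcongr
        _ = ε ^ k * S ^ n := by
          rw [mul_pow, mul_assoc, ← pow_add, Nat.add_sub_cancel' hkn]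
        _ ≤ ε * S ^ n := by
          gcongr
          exact pow_le_of_le_one hε.le hε1 (by omega)
    linarith
  · have h' : S ≤ ε⁻¹ * y := by
      rw [inv_mul_eq_div, le_div_iff₀ hε]; linarith
    have h1 : 1 ≤ ε⁻¹ := (one_le_inv₀ hε).2 hε1
    have : y ^ k * S ^ (n - k) ≤ (ε⁻¹) ^ n * y ^ n := by
      calc y ^ k * S ^ (n - k) ≤ y ^ k * (ε⁻¹ * y) ^ (n - k) := by gcongr
        _ = (ε⁻¹) ^ (n - k) * y ^ n := by
          rw [mul_pow, mul_left_comm, ← pow_add, Nat.add_sub_cancel' hkn]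
        _ ≤ _ := by
          gcongr
          omega
    linarith

/-- Sums of powers at least two. -/
lemma so_pow_sum {J : Type*} [Fintype J] (a : J → ℝ) (S : ℝ) (ha : ∀ j, 0 ≤ a j)
    (hS2 : ∑ j, a j ^ 2 = S ^ 2) (haS : ∀ j, a j ≤ S) (k : ℕ) (hk : 2 ≤ k) :
    ∑ j, a j ^ k ≤ S ^ k := by
  obtain ⟨m, rfl⟩ := Nat.exists_eq_add_of_le hk
  rw [pow_add, ← hS2, Finset.sum_mul]
  refine Finset.sum_le_sum fun j _ => ?_
  rw [pow_add]
  have := ha j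
  have := haS j
  gcongr

lemma so_pow_sum3 {J : Type*} [Fintype J] (a : J → ℝ) (S M : ℝ) (ha : ∀ j, 0 ≤ a j) (hS : 0 ≤ S)
    (hS2 : ∑ j, a j ^ 2 = S ^ 2) (haS : ∀ j, a j ≤ S) (hM : ∀ j, a j ≤ M) (k : ℕ) (hk : 3 ≤ k) :
    S * ∑ j, a j ^ k ≤ M * S ^ k := by
  obtain ⟨m, rfl⟩ := Nat.exists_eq_add_of_le hk
  have : M * S ^ (3 + m) = S * (S ^ 2 * (M * S ^ m)) := by ring
  rw [this]
  gcongr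
  rw [← hS2, Finset.sum_mul]
  refine Finset.sum_le_sum fun j _ => ?_
  have h1 := ha j
  have h2 := haS j
  have h3 := hM j
  have : a j ^ (3 + m) = a j ^ 2 * (a j * a j ^ m) := by ring
  rw [this]
  have : 0 ≤ M := h1.trans h3
  gcongr

open Classical in
lemma so_N {P J : Type*} [Fintype P] [DecidableEq P] [Fintype J] (s : Setoid P) (a : J → ℝ) (S : ℝ)
    (ha : ∀ j, 0 ≤ a j) (hS : 0 ≤ S) (hS2 : ∑ j, a j ^ 2 = S ^ 2) (haS : ∀ j, a j ≤ S)
    (hs : ∀ p, ∃ q, q ≠ p ∧ s p q) :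
    ∑ l : P → J with soCons s l, ∏ p, a (l p) ≤ S ^ Fintype.card P := by
  rw [so_fact s (fun _ j => a j)]
  have hc : S ^ Fintype.card P = ∏ q : Quotient s, S ^ #{p | Quotient.mk s p = q} := by
    rw [Finset.prod_pow_eq_pow_sum, ← Finset.card_eq_sum_card_fiberwise]
    · simp
    · intro x _; simp
  rw [hc]
  refine Finset.prod_le_prod (fun q _ => Finset.sum_nonneg fun j _ =>
    Finset.prod_nonneg fun _ _ => ha j) fun q _ => ?_
  simp only [Finset.prod_const]
  apply so_pow_sum a S ha hS2 haS
  induction q using Quotient.inductionOn with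
  | h p =>
    obtain ⟨q, hq, hpq⟩ := hs p
    have : 1 < #{p' | Quotient.mk s p' = Quotient.mk s p} := by
      rw [Finset.one_lt_card]
      exact ⟨p, by simp, q, by simpa using Quotient.sound (s.symm hpq), hq.symm⟩
    omega

open Classical in
lemma so_N3 {P J : Type*} [Fintype P] [DecidableEq P] [Fintype J] (s : Setoid P) (a : J → ℝ) (S M : ℝ)
    (ha : ∀ j, 0 ≤ a j) (hS : 0 ≤ S) (hS2 : ∑ j, a j ^ 2 = S ^ 2) (haS : ∀ j, a j ≤ S)
    (hM : ∀ j, a j ≤ M)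
    (hs : ∀ p, ∃ q, q ≠ p ∧ s p q)
    (hs3 : ∃ p, 2 < #{p' | s p' p}) :
    S * ∑ l : P → J with soCons s l, ∏ p, a (l p) ≤ M * S ^ Fintype.card P := by
  rw [so_fact s (fun _ j => a j)]
  have hc : S ^ Fintype.card P = ∏ q : Quotient s, S ^ #{p | Quotient.mk s p = q} := by
    rw [Finset.prod_pow_eq_pow_sum, ← Finset.card_eq_sum_card_fiberwise]
    · simp
    · intro x _; simp
  rw [hc]
  obtain ⟨p0, hp0⟩ := hs3
  have hq0 : 3 ≤ #{p' | Quotient.mk s p' = Quotient.mk s p0} := by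
    have : ∀ p', Quotient.mk s p' = Quotient.mk s p0 ↔ s p' p0 := fun p' => Quotient.eq
    simp only [this]; exact hp0
  rw [← Finset.mul_prod_erase univ _ (mem_univ (Quotient.mk s p0)),
    ← Finset.mul_prod_erase univ _ (mem_univ (Quotient.mk s p0)), ← mul_assoc, ← mul_assoc]
  simp only [Finset.prod_const]
  have hM0 : 0 ≤ M * S ^ #{p' | Quotient.mk s p' = Quotient.mk s p0} := by
    refine le_trans ?_ (so_pow_sum3 a S M ha hS hS2 haS hM _ hq0)
    exact mul_nonneg hS (Finset.sum_nonneg fun j _ => pow_nonneg (ha j) _)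
  refine mul_le_mul (so_pow_sum3 a S M ha hS hS2 haS hM _ hq0) ?_ ?_ hM0
  · refine Finset.prod_le_prod (fun q _ => Finset.sum_nonneg fun j _ =>
      pow_nonneg (ha j) _) fun q _ => ?_
    apply so_pow_sum a S ha hS2 haS
    induction q using Quotient.inductionOn with
    | h p =>
      obtain ⟨q, hq, hpq⟩ := hs p
      have : 1 < #{p' | Quotient.mk s p' = Quotient.mk s p} := by
        rw [Finset.one_lt_card]
        exact ⟨p, by simp, q, by simpa using Quotient.sound (s.symm hpq), hq.symm⟩
      omega
  · exact Finset.prod_nonneg fun q _ => Finset.sum_nonneg fun j _ => pow_nonneg (ha j) _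

/-- The multilinear form `v ↦ ∏ᵢ B(v(inl i), v(inr i))`. -/
noncomputable def soM {V : Type*} [AddCommGroup V] [Module ℝ V] (B : V →ₗ[ℝ] V →ₗ[ℝ] ℝ) (r : ℕ) :
    MultilinearMap ℝ (fun _ : Fin r ⊕ Fin r => V) ℝ where
  toFun v := ∏ i, B (v (Sum.inl i)) (v (Sum.inr i))
  map_update_add' := by
    intro inst v p x y
    rcases p with i | i
    · have h := fun z => (Finset.mul_prod_erase univ (fun j =>
        B (Function.update v (Sum.inl i) z (Sum.inl j))
          (Function.update v (Sum.inl i) z (Sum.inr j))) (mem_univ i)).symm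
      have h2 : ∀ z, ∏ j ∈ univ.erase i, B (Function.update v (Sum.inl i) z (Sum.inl j))
          (Function.update v (Sum.inl i) z (Sum.inr j)) =
          ∏ j ∈ univ.erase i, B (v (Sum.inl j)) (v (Sum.inr j)) := by
        intro z
        refine Finset.prod_congr rfl fun j hj => ?_
        have hj := Finset.ne_of_mem_erase hj
        simp [Function.update_of_ne, hj]
      simp only [h, h2]
      simp [add_mul]
    · have h := fun z => (Finset.mul_prod_erase univ (fun j =>
        B (Function.update v (Sum.inr i) z (Sum.inl j))
          (Function.update v (Sum.inr i) z (Sum.inr j))) (mem_univ i)).symm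
      have h2 : ∀ z, ∏ j ∈ univ.erase i, B (Function.update v (Sum.inr i) z (Sum.inl j))
          (Function.update v (Sum.inr i) z (Sum.inr j)) =
          ∏ j ∈ univ.erase i, B (v (Sum.inl j)) (v (Sum.inr j)) := by
        intro z
        refine Finset.prod_congr rfl fun j hj => ?_
        have hj := Finset.ne_of_mem_erase hj
        simp [Function.update_of_ne, hj]
      simp only [h, h2]
      simp [add_mul]
  map_update_smul' := by
    intro inst v p c x
    rcases p with i | i
    · have h := fun z => (Finset.mul_prod_erase univ (fun j =>
        B (Function.update v (Sum.inl i) z (Sum.inl j))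
          (Function.update v (Sum.inl i) z (Sum.inr j))) (mem_univ i)).symm
      have h2 : ∀ z, ∏ j ∈ univ.erase i, B (Function.update v (Sum.inl i) z (Sum.inl j))
          (Function.update v (Sum.inl i) z (Sum.inr j)) =
          ∏ j ∈ univ.erase i, B (v (Sum.inl j)) (v (Sum.inr j)) := by
        intro z
        refine Finset.prod_congr rfl fun j hj => ?_
        have hj := Finset.ne_of_mem_erase hj
        simp [Function.update_of_ne, hj]
      simp only [h, h2]
      simp [mul_assoc]
    · have h := fun z => (Finset.mul_prod_erase univ (fun j =>
        B (Function.update v (Sum.inr i) z (Sum.inl j))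
          (Function.update v (Sum.inr i) z (Sum.inr j))) (mem_univ i)).symm
      have h2 : ∀ z, ∏ j ∈ univ.erase i, B (Function.update v (Sum.inr i) z (Sum.inl j))
          (Function.update v (Sum.inr i) z (Sum.inr j)) =
          ∏ j ∈ univ.erase i, B (v (Sum.inl j)) (v (Sum.inr j)) := by
        intro z
        refine Finset.prod_congr rfl fun j hj => ?_
        have hj := Finset.ne_of_mem_erase hj
        simp [Function.update_of_ne, hj]
      simp only [h, h2]
      simp [mul_assoc]

lemma soM_apply {V : Type*} [AddCommGroup V] [Module ℝ V] (B : V →ₗ[ℝ] V →ₗ[ℝ] ℝ) (r : ℕ)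
    (v : Fin r ⊕ Fin r → V) : soM B r v = ∏ i, B (v (Sum.inl i)) (v (Sum.inr i)) := rfl

lemma soM_bound {V : Type*} [AddCommGroup V] [Module ℝ V] (B : V →ₗ[ℝ] V →ₗ[ℝ] ℝ)
    (hsym : ∀ u v : V, B u v = B v u) (hpos : ∀ v : V, 0 ≤ B v v) (r : ℕ)
    (v : Fin r ⊕ Fin r → V) : |soM B r v| ≤ ∏ p, Real.sqrt (B (v p) (v p)) := by
  rw [soM_apply, Finset.abs_prod, Fintype.prod_sum_type, ← Finset.prod_mul_distrib]
  refine Finset.prod_le_prod (fun _ _ => abs_nonneg _) fun i _ => ?_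
  rw [← Real.sqrt_mul (hpos _)]
  apply Real.abs_le_sqrt
  have := LinearMap.BilinForm.apply_mul_apply_le_of_forall_zero_le B hpos
    (v (Sum.inl i)) (v (Sum.inr i))
  rw [hsym (v (Sum.inr i)) (v (Sum.inl i))] at this
  rw [sq]
  exact this

open Classical in
/-- The sum over tuples which are constant on the classes of a setoid. -/
noncomputable def soT {V : Type*} [AddCommGroup V] [Module ℝ V] (B : V →ₗ[ℝ] V →ₗ[ℝ] ℝ) (r : ℕ)
    {J : Type*} [Fintype J] (f : J → V) (s : Setoid (Fin r ⊕ Fin r)) : ℝ :=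
  ∑ l : Fin r ⊕ Fin r → J with soCons s l, soM B r (fun p => f (l p))

lemma soT_bound3 {V : Type*} [AddCommGroup V] [Module ℝ V] (B : V →ₗ[ℝ] V →ₗ[ℝ] ℝ)
    (hsym : ∀ u v : V, B u v = B v u) (hpos : ∀ v : V, 0 ≤ B v v) (r : ℕ)
    {J : Type*} [Fintype J] (f : J → V) (s : Setoid (Fin r ⊕ Fin r)) (S M : ℝ)
    (hS : 0 ≤ S) (hS2 : ∑ j, Real.sqrt (B (f j) (f j)) ^ 2 = S ^ 2)
    (haS : ∀ j, Real.sqrt (B (f j) (f j)) ≤ S) (hM : ∀ j, Real.sqrt (B (f j) (f j)) ≤ M)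
    (hs : ∀ p, ∃ q, q ≠ p ∧ s p q) (hs3 : ∃ p, 2 < Nat.card {p' // s p' p}) :
    S * |soT B r f s| ≤ M * S ^ (2 * r) := by
  classical
  have := so_N3 s (fun j => Real.sqrt (B (f j) (f j))) S M (fun _ => Real.sqrt_nonneg _) hS hS2
    haS hM hs (by
      obtain ⟨p, hp⟩ := hs3
      refine ⟨p, ?_⟩
      rw [Nat.card_eq_fintype_card, Fintype.card_subtype] at hp
      convert hp)
  have hc : Fintype.card (Fin r ⊕ Fin r) = 2 * r := by simp; ring
  rw [hc] at this
  refine le_trans ?_ this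
  gcongr
  unfold soT
  refine (Finset.abs_sum_le_sum_abs _ _).trans ?_
  refine Finset.sum_le_sum fun l _ => ?_
  exact soM_bound B hsym hpos r _

lemma soT_bound {V : Type*} [AddCommGroup V] [Module ℝ V] (B : V →ₗ[ℝ] V →ₗ[ℝ] ℝ)
    (hsym : ∀ u v : V, B u v = B v u) (hpos : ∀ v : V, 0 ≤ B v v) (r : ℕ)
    {J : Type*} [Fintype J] (f : J → V) (s : Setoid (Fin r ⊕ Fin r)) (S : ℝ)
    (hS : 0 ≤ S) (hS2 : ∑ j, Real.sqrt (B (f j) (f j)) ^ 2 = S ^ 2)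
    (haS : ∀ j, Real.sqrt (B (f j) (f j)) ≤ S)
    (hs : ∃ p, ∀ q, s p q → q = p) :
    ∃ k, 1 ≤ k ∧ k ≤ 2 * r ∧
      |soT B r f s| ≤ Real.sqrt (B (∑ j, f j) (∑ j, f j)) ^ k * S ^ (2 * r - k) := by
  classical
  have hc : Fintype.card (Fin r ⊕ Fin r) = 2 * r := by simp; ring
  set iso : Fin r ⊕ Fin r → Prop := fun p => ∀ q, s p q → q = p with hiso
  have hle : Fintype.card {p // iso p} ≤ 2 * r := by
    rw [← hc]; exact Fintype.card_subtype_le _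
  refine ⟨Fintype.card {p // iso p}, ?_, hle, ?_⟩
  · obtain ⟨p, hp⟩ := hs
    exact Fintype.card_pos_iff.2 ⟨⟨p, hp⟩⟩
  have hcn : Fintype.card {p // ¬ iso p} = 2 * r - Fintype.card {p // iso p} := by
    rw [Fintype.card_subtype_compl, hc]
  set s' : Setoid {p // ¬ iso p} := Setoid.comap Subtype.val s with hs'
  have hN := so_N s' (fun j => Real.sqrt (B (f j) (f j))) S (fun _ => Real.sqrt_nonneg _) hS hS2
    haS (by
      rintro ⟨p, hp⟩
      have hp0 := hp
      simp only [hiso] at hp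
      push Not at hp
      obtain ⟨q, hq, hqp⟩ := hp
      refine ⟨⟨q, fun h => hqp (h p (s.symm hq)).symm⟩, ?_, hq⟩
      simpa using hqp)
  rw [hcn] at hN
  -- rewrite the sum
  have key : soT B r f s = ∑ l : {p // ¬ iso p} → J with soCons s' l,
      soM B r (fun p => if h : iso p then ∑ j, f j else f (l ⟨p, h⟩)) := by
    have h1 : ∀ l : {p // ¬ iso p} → J,
        soM B r (fun p => if h : iso p then ∑ j, f j else f (l ⟨p, h⟩)) =
        ∑ l1 : {p // iso p} → J,
          soM B r (fun p => if h : iso p then f (l1 ⟨p, h⟩) else f (l ⟨p, h⟩)) := by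
      intro l
      have := ((soM B r).domDomRestrict iso (fun p => f (l p))).map_sum
        (fun (_ : {p // iso p}) (j : J) => f j)
      simp only [MultilinearMap.domDomRestrict_apply] at this
      exact this
    simp only [h1]
    unfold soT
    rw [Finset.sum_filter, Finset.sum_filter]
    rw [← (Equiv.piEquivPiSubtypeProd iso (fun _ => J)).symm.sum_comp, Fintype.sum_prod_type_right]
    refine Finset.sum_congr rfl fun l2 _ => ?_
    by_cases hl2 : soCons s' l2
    · rw [if_pos hl2]
      refine Finset.sum_congr rfl fun l1 _ => ?_
      rw [if_pos]
      · congr 1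
        funext p
        simp only [Equiv.piEquivPiSubtypeProd_symm_apply]
        split_ifs <;> rfl
      · intro p q hpq
        simp only [Equiv.piEquivPiSubtypeProd_symm_apply]
        by_cases hp : iso p
        · have := hp q hpq
          subst this; rfl
        · by_cases hq : iso q
          · have := hq p (s.symm hpq)
            subst this; rfl
          · rw [dif_neg hp, dif_neg hq]
            exact hl2 _ _ hpq
    · rw [if_neg hl2]
      refine Finset.sum_eq_zero fun l1 _ => ?_
      rw [if_neg]
      intro h
      apply hl2
      rintro ⟨p, hp⟩ ⟨q, hq⟩ hpq
      have := h p q hpq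
      simpa only [Equiv.piEquivPiSubtypeProd_symm_apply, dif_neg hp, dif_neg hq] using this
  rw [key]
  refine (Finset.abs_sum_le_sum_abs (G := ℝ) _ _).trans ?_
  refine le_trans ?_ (mul_le_mul_of_nonneg_left hN (by positivity))
  rw [Finset.mul_sum]
  refine Finset.sum_le_sum fun l _ => ?_
  refine (soM_bound B hsym hpos r _).trans (le_of_eq ?_)
  rw [← Fintype.prod_subtype_mul_prod_subtype iso]
  congr 1
  · rw [Fintype.card, ← Finset.prod_const]
    refine Finset.prod_congr rfl fun p _ => ?_
    rw [dif_pos p.2]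
  · refine Finset.prod_congr rfl fun p _ => ?_
    rw [dif_neg p.2]

lemma so_gram {V : Type*} [AddCommGroup V] [Module ℝ V] (B : V →ₗ[ℝ] V →ₗ[ℝ] ℝ)
    (hsym : ∀ u v : V, B u v = B v u) (hpos : ∀ v : V, 0 ≤ B v v)
    {J : Type*} [Fintype J] [DecidableEq J] (f : J → V) :
    ∃ H : J → J → ℝ, (∀ i j, B (f i) (f j) = ∑ k, H i k * H j k) ∧
      ∀ k k', 0 ≤ ∑ i, H i k * H i k' := by
  set G : Matrix J J ℝ := Matrix.of fun i j => B (f i) (f j) with hG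
  have hH : G.IsHermitian := by
    ext i j
    simp [hG, hsym (f i) (f j)]
  have hps : G.PosSemidef := by
    refine Matrix.PosSemidef.of_dotProduct_mulVec_nonneg hH fun x => ?_
    have := hpos (∑ j, x j • f j)
    refine this.trans (le_of_eq ?_)
    simp [dotProduct, Matrix.mulVec, hG, Finset.mul_sum]
    try rw [Finset.sum_comm]
    try refine Finset.sum_congr rfl fun i _ => Finset.sum_congr rfl fun j _ => ?_
    ring
  have hl := hps.eigenvalues_nonneg
  set U : Matrix J J ℝ := (hH.eigenvectorUnitary).1 with hU
  have hUU : star U * U = 1 := Unitary.coe_star_mul_self hH.eigenvectorUnitary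
  have hsp := hH.spectral_theorem
  rw [Unitary.conjStarAlgAut_apply] at hsp
  refine ⟨fun i k => U i k * Real.sqrt (hH.eigenvalues k), ?_, ?_⟩
  · intro i j
    have : B (f i) (f j) = G i j := rfl
    rw [this]
    conv_lhs => rw [hsp]
    rw [Matrix.mul_apply]
    refine Finset.sum_congr rfl fun k _ => ?_
    rw [Matrix.mul_diagonal]
    have h2 := Real.mul_self_sqrt (hl k)
    simp only [Matrix.star_apply, Function.comp, RCLike.ofReal_real_eq_id, id, star_trivial]
    rw [← hU]
    linear_combination (-(U i k * U j k)) * h2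
  · intro k k'
    have h3 : ∑ i, U i k * U i k' = (1 : Matrix J J ℝ) k k' := by
      rw [← hUU, Matrix.mul_apply]
      simp [Matrix.star_apply]
    have h4 : ∑ i, U i k * Real.sqrt (hH.eigenvalues k) * (U i k' * Real.sqrt (hH.eigenvalues k'))
        = (∑ i, U i k * U i k') * (Real.sqrt (hH.eigenvalues k) * Real.sqrt (hH.eigenvalues k')) := by
      rw [Finset.sum_mul]
      exact Finset.sum_congr rfl fun i _ => by ring
    rw [h4, h3, Matrix.one_apply]
    split_ifs <;> positivity

lemma soT_nonneg {V : Type*} [AddCommGroup V] [Module ℝ V] (B : V →ₗ[ℝ] V →ₗ[ℝ] ℝ)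
    (hsym : ∀ u v : V, B u v = B v u) (hpos : ∀ v : V, 0 ≤ B v v) (r : ℕ)
    {J : Type*} [Fintype J] (f : J → V) (s : Setoid (Fin r ⊕ Fin r))
    (hs : ∀ p, Nat.card {p' // s p' p} = 2) : 0 ≤ soT B r f s := by
  classical
  obtain ⟨H, h1, h2⟩ := so_gram B hsym hpos f
  have key : soT B r f s = ∑ k : Fin r → J, ∑ l : Fin r ⊕ Fin r → J with soCons s l, ∏ p, H (l p) (k (Sum.elim id id p)) := by
    unfold soT
    rw [Finset.sum_comm]
    refine Finset.sum_congr (by congr) fun l _ => ?_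
    rw [soM_apply]
    simp only [h1]
    rw [Finset.prod_univ_sum, Fintype.piFinset_univ]
    refine Finset.sum_congr rfl fun k _ => ?_
    rw [Fintype.prod_sum_type, ← Finset.prod_mul_distrib]
    rfl
  rw [key]
  refine Finset.sum_nonneg fun k _ => ?_
  have := so_fact s (fun p j => H j (k (Sum.elim id id p)))
  rw [this]
  refine Finset.prod_nonneg fun q _ => ?_
  induction q using Quotient.inductionOn with
  | h p =>
    have hc : #{p' | Quotient.mk s p' = Quotient.mk s p} = 2 := by
      have h := hs p
      rw [Nat.card_eq_fintype_card, Fintype.card_subtype] at h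
      rw [← h]
      congr 1
      ext x
      simp only [mem_filter, mem_univ, true_and]
      exact Quotient.eq
    obtain ⟨x, y, hxy, he⟩ := Finset.card_eq_two.1 hc
    rw [he]
    simp only [Finset.prod_pair hxy]
    exact h2 _ _

/-- The setoid generated by a set of edges. -/
def soS {P : Type*} (E : Finset (Sym2 P)) : Setoid P :=
  Relation.EqvGen.setoid (fun p q => s(p, q) ∈ E)

lemma soS_le {P : Type*} (E : Finset (Sym2 P)) (t : Setoid P)
    (h : ∀ p q, s(p, q) ∈ E → t p q) : ∀ p q, soS E p q → t p q := by
  intro p q hpq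
  change Relation.EqvGen _ p q at hpq
  induction hpq with
  | rel x y hxy => exact h x y hxy
  | refl x => exact t.refl x
  | symm x y _ ih => exact t.symm ih
  | trans x y z _ _ ih1 ih2 => exact t.trans ih1 ih2

lemma soS_of_mem {P : Type*} (E : Finset (Sym2 P)) {p q : P} (h : s(p, q) ∈ E) : soS E p q :=
  Relation.EqvGen.rel _ _ h

lemma soCons_iff {P J : Type*} (E : Finset (Sym2 P)) (l : P → J) :
    soCons (soS E) l ↔ ∀ e ∈ E, (e.map l).IsDiag := by
  constructor
  · intro h e he
    induction e using Sym2.inductionOn with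
    | hf x y =>
      simpa using h x y (soS_of_mem E he)
  · intro h p q hpq
    refine soS_le E (Setoid.ker l) ?_ p q hpq
    intro x y hxy
    simpa using h _ hxy

/-- Injectivity (with classical decidability only). -/
def soInj {P J : Type*} (l : P → J) : Prop := Function.Injective l

lemma so_inj_iff {P J : Type*} (l : P → J) :
    soInj l ↔ ∀ e : Sym2 P, ¬ e.IsDiag → ¬ (e.map l).IsDiag := by
  constructor
  · intro h e he
    induction e using Sym2.inductionOn with
    | hf x y =>
      simp only [Sym2.map_mk, Sym2.mk_isDiag_iff] at he ⊢
      exact fun h' => he (h h')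
  · intro h x y hxy
    by_contra hne
    exact h s(x, y) (by simpa using hne) (by simpa using hxy)

open Classical in
lemma so_expand {P J : Type*} [Fintype P] [DecidableEq P] [Fintype J] (g : (P → J) → ℝ) :
    ∑ l : P → J with soInj l, g l =
      ∑ E ∈ (univ.filter (fun e : Sym2 P => ¬ e.IsDiag)).powerset,
        (-1) ^ #E * ∑ l : P → J with soCons (soS E) l, g l := by
  simp only [Finset.sum_filter, Finset.mul_sum]
  rw [Finset.sum_comm]
  refine Finset.sum_congr rfl fun l _ => ?_
  have h1 : (if soInj l then (1 : ℝ) else 0) =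
      ∏ e ∈ univ.filter (fun e : Sym2 P => ¬ e.IsDiag),
        (1 + -(if (e.map l).IsDiag then (1 : ℝ) else 0)) := by
    split_ifs with h
    · symm
      refine Finset.prod_eq_one fun e he => ?_
      rw [if_neg ((so_inj_iff l).1 h e (by simpa using he))]
      simp
    · rw [so_inj_iff] at h
      push Not at h
      obtain ⟨e, he, he'⟩ := h
      symm
      refine Finset.prod_eq_zero (i := e) (by simpa using he) ?_
      rw [if_pos he']; simp
  rw [Finset.prod_one_add] at h1
  have h2 : (if soInj l then g l else 0) =
      (if soInj l then (1 : ℝ) else 0) * g l := by split_ifs <;> simp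
  rw [h2, h1, Finset.sum_mul]
  refine Finset.sum_congr rfl fun E _ => ?_
  by_cases hE : soCons (soS E) l
  · rw [if_pos hE]
    rw [soCons_iff] at hE
    congr 1
    rw [← Finset.prod_const]
    refine Finset.prod_congr rfl fun e he => ?_
    rw [if_pos (hE e he)]
  · rw [if_neg hE]
    rw [soCons_iff] at hE
    push Not at hE
    obtain ⟨e, he, he'⟩ := hE
    rw [Finset.prod_eq_zero he, zero_mul, mul_zero]
    rw [if_neg he']; simp

lemma so_card {P : Type*} [Fintype P] [DecidableEq P] (E : Finset (Sym2 P))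
    (hE : ∀ e ∈ E, ¬ e.IsDiag) (hs : ∀ p, Nat.card {p' // soS E p' p} = 2) :
    Fintype.card P = 2 * #E := by
  classical
  have h1 := Finset.sum_card_bipartiteAbove_eq_sum_card_bipartiteBelow
    (s := (univ : Finset P)) (t := E) (fun p e => p ∈ e)
  have h2 : ∀ p, #(bipartiteAbove (fun (p : P) (e : Sym2 P) => p ∈ e) E p) = 1 := by
    intro p
    have h := hs p
    rw [Nat.card_eq_fintype_card, Fintype.card_subtype] at h
    have hex : ∃ q, s(p, q) ∈ E := by
      by_contra hne
      push Not at hne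
      have hle := soS_le E (Setoid.ker (fun x => x = p)) (by
        intro x y hxy
        change (x = p) = (y = p)
        have hx : x ≠ p := by rintro rfl; exact hne _ hxy
        have hy : y ≠ p := by rintro rfl; exact hne _ (Sym2.eq_swap ▸ hxy)
        simp [hx, hy])
      have : #{p' | soS E p' p} ≤ 1 := by
        rw [Finset.card_le_one_iff]
        intro x y hx hy
        have h3 : (x = p) = (p = p) := hle x p (by simpa using hx)
        have h4 : (y = p) = (p = p) := hle y p (by simpa using hy)
        simp at h3 h4
        rw [h3, h4]
      omega
    obtain ⟨q, hq⟩ := hex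
    have hqp : q ≠ p := by
      rintro rfl
      exact hE _ hq (by simp)
    rw [Finset.card_eq_one]
    refine ⟨s(p, q), ?_⟩
    ext e
    simp only [bipartiteAbove, mem_filter, mem_singleton]
    constructor
    · rintro ⟨he, hpe⟩
      obtain ⟨x, rfl⟩ := Sym2.mem_iff_exists.1 hpe
      have hxp : x ≠ p := by
        rintro rfl
        exact hE _ he (by simp)
      by_contra hne
      have hxq : x ≠ q := by rintro rfl; exact hne rfl
      have : 2 < #{p' | soS E p' p} := by
        rw [Finset.two_lt_card]
        refine ⟨p, by simpa using (soS E).refl p, q,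
          by simpa using (soS E).symm (soS_of_mem E hq), x,
          by simpa using (soS E).symm (soS_of_mem E he), hqp.symm, hxp.symm, hxq.symm⟩
      omega
    · rintro rfl
      exact ⟨hq, by simp⟩
  have h3 : ∀ e ∈ E, #(bipartiteBelow (fun (p : P) (e : Sym2 P) => p ∈ e) univ e) = 2 := by
    intro e he
    rw [← Sym2.card_toFinset_of_not_isDiag e (hE e he)]
    congr 1
    ext x
    simp [bipartiteBelow]
  rw [Finset.sum_congr rfl (fun p _ => h2 p), Finset.sum_congr rfl h3] at h1
  simp at h1
  omega

/-- The standard perfect matching. -/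
def soE0 (r : ℕ) : Finset (Sym2 (Fin r ⊕ Fin r)) :=
  univ.image (fun i : Fin r => s(Sum.inl i, Sum.inr i))

lemma soE0_card (r : ℕ) (p : Fin r ⊕ Fin r) : Nat.card {p' // soS (soE0 r) p' p} = 2 := by
  classical
  rw [Nat.card_eq_fintype_card, Fintype.card_subtype]
  have hmem : ∀ i : Fin r, soS (soE0 r) (Sum.inl i) (Sum.inr i) := fun i =>
    soS_of_mem _ (by simp [soE0])
  have hle := soS_le (soE0 r) (Setoid.ker (Sum.elim id id)) (by
    intro x y hxy
    change Sum.elim id id x = Sum.elim id id y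
    simp only [soE0, mem_image, mem_univ, true_and] at hxy
    obtain ⟨i, hi⟩ := hxy
    rw [Sym2.eq_iff] at hi
    rcases hi with ⟨rfl, rfl⟩ | ⟨rfl, rfl⟩ <;> rfl)
  rw [Finset.card_eq_two]
  obtain ⟨i, hi⟩ : ∃ i, Sum.elim id id p = i := ⟨_, rfl⟩
  refine ⟨Sum.inl i, Sum.inr i, by simp, ?_⟩
  have hp : p = Sum.inl i ∨ p = Sum.inr i := by
    rcases p with j | j <;> simp at hi <;> simp [hi]
  ext x
  simp only [mem_filter, mem_univ, true_and, mem_insert, mem_singleton]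
  constructor
  · intro hx
    have h : Sum.elim id id x = Sum.elim id id p := hle x p hx
    rw [hi] at h
    rcases x with j | j <;> simp at h <;> simp [h]
  · intro hx
    rcases hx with rfl | rfl <;> rcases hp with rfl | rfl
    · exact (soS _).refl _
    · exact hmem _
    · exact (soS _).symm (hmem _)
    · exact (soS _).refl _

lemma soT_E0 {V : Type*} [AddCommGroup V] [Module ℝ V] (B : V →ₗ[ℝ] V →ₗ[ℝ] ℝ) (r : ℕ)
    {J : Type*} [Fintype J] (f : J → V) :
    soT B r f (soS (soE0 r)) = (∑ j, B (f j) (f j)) ^ r := by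
  classical
  have h : (∑ j, B (f j) (f j)) ^ r = ∏ i : Fin r, ∑ j, B (f j) (f j) := by simp
  rw [h, Finset.prod_univ_sum, Fintype.piFinset_univ]
  unfold soT
  symm
  refine Finset.sum_bij (fun m _ => fun p => m (Sum.elim id id p)) ?_ ?_ ?_ ?_
  · intro m _
    simp only [mem_filter, mem_univ, true_and]
    rw [soCons_iff]
    intro e he
    simp only [soE0, mem_image, mem_univ, true_and] at he
    obtain ⟨i, rfl⟩ := he
    simp
  · intro m _ m' _ h
    funext i
    exact congrFun h (Sum.inl i)
  · intro l hl
    simp only [mem_filter, mem_univ, true_and] at hl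
    rw [soCons_iff] at hl
    refine ⟨fun i => l (Sum.inl i), by simp, ?_⟩
    funext p
    rcases p with i | i
    · rfl
    · simpa using hl s(Sum.inl i, Sum.inr i) (by simp [soE0])
  · intro m _
    rw [soM_apply]
    rfl

open Classical in
lemma so_pointwise (r : ℕ) (hr : 0 < r) : ∃ C : ℝ, 0 < C ∧
    ∀ (V : Type*) [AddCommGroup V] [Module ℝ V] (B : V →ₗ[ℝ] V →ₗ[ℝ] ℝ),
    (∀ u v : V, B u v = B v u) → (∀ v : V, 0 ≤ B v v) →
    ∀ (L : ℕ) (f : Fin L → V),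
    (∑ j, B (f j) (f j)) ^ r ≤
      2 * ((-1) ^ r * ∑ l : Fin r ⊕ Fin r → Fin L with soInj l,
        soM B r (fun p => f (l p))) +
      C * (B (∑ j, f j) (∑ j, f j) ^ r + ∑ j, B (f j) (f j) ^ r) := by
  set N : Finset (Finset (Sym2 (Fin r ⊕ Fin r))) :=
    (univ.filter (fun e : Sym2 (Fin r ⊕ Fin r) => ¬ e.IsDiag)).powerset with hN
  have hND : ∀ E ∈ N, ∀ e ∈ E, ¬ e.IsDiag := by
    intro E hE e he
    have := (Finset.mem_powerset.1 hE) he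
    simpa using this
  set K : ℝ := ((#N : ℕ) : ℝ) with hK
  have hE0N : soE0 r ∈ N := by
    rw [hN, Finset.mem_powerset]
    intro e he
    simp only [soE0, mem_image, mem_univ, true_and] at he
    obtain ⟨i, rfl⟩ := he
    simp
  have hK1 : 1 ≤ K := by
    rw [hK]
    exact_mod_cast Finset.card_pos.2 ⟨_, hE0N⟩
  set ε : ℝ := 1 / (2 * K) with hε
  have hε0 : 0 < ε := by positivity
  have hε1 : ε ≤ 1 := by
    rw [hε, div_le_one (by positivity)]; linarith
  refine ⟨2 * K * (ε⁻¹) ^ (2 * r), by positivity, ?_⟩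
  intro V _ _ B hsym hpos L f
  have hsum0 : 0 ≤ ∑ j, B (f j) (f j) := Finset.sum_nonneg fun j _ => hpos _
  set S : ℝ := Real.sqrt (∑ j, B (f j) (f j)) with hSdef
  have hS : 0 ≤ S := Real.sqrt_nonneg _
  have hSS : S ^ 2 = ∑ j, B (f j) (f j) := Real.sq_sqrt hsum0
  have hS2 : ∑ j, Real.sqrt (B (f j) (f j)) ^ 2 = S ^ 2 := by
    rw [hSS]
    exact Finset.sum_congr rfl fun j _ => Real.sq_sqrt (hpos _)
  have haS : ∀ j, Real.sqrt (B (f j) (f j)) ≤ S := fun j =>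
    Real.sqrt_le_sqrt (Finset.single_le_sum (f := fun j => B (f j) (f j))
      (fun j _ => hpos _) (mem_univ j))
  have hsq : ∀ v, Real.sqrt (B v v) ^ (2 * r) = B v v ^ r := fun v => by
    rw [pow_mul, Real.sq_sqrt (hpos v)]
  have hSr : S ^ (2 * r) = (∑ j, B (f j) (f j)) ^ r := by rw [pow_mul, hSS]
  -- the maximum
  obtain ⟨M, hM0, hM, hMr⟩ : ∃ M : ℝ, 0 ≤ M ∧ (∀ j, Real.sqrt (B (f j) (f j)) ≤ M) ∧
      M ^ (2 * r) ≤ ∑ j, B (f j) (f j) ^ r := by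
    rcases isEmpty_or_nonempty (Fin L) with h | h
    · exact ⟨0, le_rfl, fun j => h.elim j, by
        rw [zero_pow (by omega)]
        exact Finset.sum_nonneg fun j _ => pow_nonneg (hpos _) _⟩
    · obtain ⟨j0, _, hj0⟩ := Finset.exists_max_image univ
        (fun j => Real.sqrt (B (f j) (f j))) univ_nonempty
      refine ⟨_, Real.sqrt_nonneg (B (f j0) (f j0)), fun j => hj0 j (mem_univ j), ?_⟩
      rw [hsq]
      exact Finset.single_le_sum (f := fun j => B (f j) (f j) ^ r)
        (fun j _ => pow_nonneg (hpos _) _) (mem_univ j0)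
  set F : ℝ := Real.sqrt (B (∑ j, f j) (∑ j, f j)) with hF
  have hF0 : 0 ≤ F := Real.sqrt_nonneg _
  have hFr : F ^ (2 * r) = B (∑ j, f j) (∑ j, f j) ^ r := hsq _
  rw [so_expand (fun l => soM B r (fun p => f (l p)))]
  rw [← hN]
  have hTdef : ∀ E, ∑ l : Fin r ⊕ Fin r → Fin L with soCons (soS E) l,
      soM B r (fun p => f (l p)) = soT B r f (soS E) := by
    intro E
    rfl
  simp only [hTdef]
  set good : Finset (Sym2 (Fin r ⊕ Fin r)) → Prop :=
    fun E => ∀ p, Nat.card {p' // soS E p' p} = 2 with hgood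
  set R : ℝ := ε * S ^ (2 * r) + (ε⁻¹) ^ (2 * r) * F ^ (2 * r) + (ε⁻¹) ^ (2 * r) * M ^ (2 * r)
    with hR
  have hR0 : 0 ≤ R := by positivity
  have hbad : ∀ E, ¬ good E → |soT B r f (soS E)| ≤ R := by
    intro E hE
    by_cases hiso : ∃ p, ∀ q, soS E p q → q = p
    · obtain ⟨k, hk1, hk2, hk⟩ := soT_bound B hsym hpos r f (soS E) S hS hS2 haS hiso
      have := so_interp (2 * r) k hk1 hk2 ε F S hε0 hε1 hF0 hS
      have h3 : 0 ≤ (ε⁻¹) ^ (2 * r) * M ^ (2 * r) := by positivity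
      rw [← hF] at hk
      linarith
    · push Not at hiso
      have hiso' : ∀ p, ∃ q, q ≠ p ∧ soS E p q := fun p => by
        obtain ⟨q, h1, h2⟩ := hiso p
        exact ⟨q, h2, h1⟩
      simp only [hgood] at hE
      push Not at hE
      obtain ⟨p, hp⟩ := hE
      have hp2 : 2 < Nat.card {p' // soS E p' p} := by
        have : 2 ≤ Nat.card {p' // soS E p' p} := by
          obtain ⟨q, h1, h2⟩ := hiso' p
          rw [Nat.card_eq_fintype_card, Fintype.card_subtype]
          have : 1 < #{p' | soS E p' p} := by
            rw [Finset.one_lt_card]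
            exact ⟨p, by simpa using (soS E).refl p, q, by simpa using (soS E).symm h2, h1.symm⟩
          exact this
        omega
      have h3 := soT_bound3 B hsym hpos r f (soS E) S M hS hS2 haS hM hiso' ⟨p, hp2⟩
      have h4 : |soT B r f (soS E)| ≤ M ^ 1 * S ^ (2 * r - 1) := by
        rcases hS.eq_or_lt with h0 | h0
        · have : soT B r f (soS E) = 0 := by
            have hz : ∀ j, Real.sqrt (B (f j) (f j)) = 0 := fun j =>
              le_antisymm (h0 ▸ haS j) (Real.sqrt_nonneg _)
            unfold soT
            refine Finset.sum_eq_zero fun l _ => ?_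
            have := soM_bound B hsym hpos r (fun p => f (l p))
            rw [Finset.prod_eq_zero (mem_univ p) (hz _)] at this
            exact abs_nonpos_iff.1 this
          rw [this, abs_zero]
          positivity
        · have h5 : M * S ^ (2 * r) = S * (M ^ 1 * S ^ (2 * r - 1)) := by
            obtain ⟨m, hm⟩ := Nat.exists_eq_add_of_le (show 1 ≤ 2 * r by omega)
            rw [hm, Nat.add_sub_cancel_left]
            ring
          rw [h5] at h3
          exact le_of_mul_le_mul_left h3 h0
      have := so_interp (2 * r) 1 le_rfl (by omega) ε M S hε0 hε1 hM0 hS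
      have h3 : 0 ≤ (ε⁻¹) ^ (2 * r) * F ^ (2 * r) := by positivity
      linarith
  have hgoodsign : ∀ E ∈ N, good E → (-1 : ℝ) ^ #E = (-1) ^ r := by
    intro E hE hg
    have := so_card E (hND E hE) hg
    have hc : Fintype.card (Fin r ⊕ Fin r) = 2 * r := by simp; ring
    have : #E = r := by omega
    rw [this]
  have hone : ((-1 : ℝ) ^ r) * (-1) ^ r = 1 := by
    rw [← mul_pow]; simp
  have hmain : S ^ (2 * r) ≤ (-1) ^ r * ∑ E ∈ N, (-1) ^ #E * soT B r f (soS E) + K * R := by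
    have hE0 : ∑ E ∈ N, (if E = soE0 r then S ^ (2 * r) else 0) = S ^ (2 * r) := by
      rw [Finset.sum_ite_eq' N, if_pos hE0N]
    have hKR : K * R = ∑ E ∈ N, R := by simp [hK]
    rw [hKR, Finset.mul_sum, ← Finset.sum_add_distrib]
    conv_lhs => rw [← hE0]
    refine Finset.sum_le_sum fun E hE => ?_
    by_cases hg : good E
    · rw [hgoodsign E hE hg, ← mul_assoc, hone, one_mul]
      split_ifs with h
      · rw [h, soT_E0, hSr]; linarith
      · have := soT_nonneg B hsym hpos r f (soS E) hg
        linarith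
    · rw [if_neg (by rintro rfl; exact hg (soE0_card r))]
      have h1 := hbad E hg
      have h2 : |(-1 : ℝ) ^ r * ((-1) ^ #E * soT B r f (soS E))| = |soT B r f (soS E)| := by
        simp [abs_mul]
      have := neg_abs_le ((-1 : ℝ) ^ r * ((-1) ^ #E * soT B r f (soS E)))
      linarith
  have hKε : K * ε = 1 / 2 := by rw [hε]; field_simp
  have hKR : K * R = 1 / 2 * S ^ (2 * r) +
      K * (ε⁻¹) ^ (2 * r) * (F ^ (2 * r) + M ^ (2 * r)) := by
    rw [← hKε, hR]; ring
  rw [hKR] at hmain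
  rw [← hSr, ← hFr]
  have hlast : K * (ε⁻¹) ^ (2 * r) * (F ^ (2 * r) + M ^ (2 * r)) ≤
      K * (ε⁻¹) ^ (2 * r) * (F ^ (2 * r) + ∑ j, B (f j) (f j) ^ r) := by
    gcongr
  linarith

/-- Positions as pairs. -/
def soD (r : ℕ) (n : Fin (2 * r)) : Fin r ⊕ Fin r :=
  if n.1 % 2 = 0 then Sum.inl ⟨n.1 / 2, by have := n.isLt; omega⟩
  else Sum.inr ⟨n.1 / 2, by have := n.isLt; omega⟩

lemma soD_inj (r : ℕ) : Function.Injective (soD r) := by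
  intro a b h
  unfold soD at h
  split_ifs at h with h1 h2 h2 <;> simp at h <;> apply Fin.ext <;> omega

lemma soD_even (r : ℕ) (i : Fin r) (h : 2 * i.1 < 2 * r) : soD r ⟨2 * i.1, h⟩ = Sum.inl i := by
  unfold soD
  simp

lemma soD_odd (r : ℕ) (i : Fin r) (h : 2 * i.1 + 1 < 2 * r) :
    soD r ⟨2 * i.1 + 1, h⟩ = Sum.inr i := by
  unfold soD
  rw [if_neg (by simp only; omega)]
  congr 1
  apply Fin.ext
  simp only
  omega

/-- Vector-valued converse inequality for type IV superorthogonality: for each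
`r ≥ 1` and `A` there is a constant `C_{r,A} > 0` such that for any σ-finite
measure space `(X,μ)`, any real vector space `V` with a symmetric positive
bilinear form `𝔅` (write `𝔅(v) := 𝔅(v,v)^{1/2}`), and any `f₁,…,f_L : X → V`
making all products `𝔅(f_{l₁},f_{l₂})⋯𝔅(f_{l_{2r−1}},f_{l_{2r}})` measurable
and integrable, satisfying type IV superorthogonality, and satisfying
`‖(∑ 𝔅(f_l)^{2r})^{1/(2r)}‖_{L^{2r}} ≤ A‖𝔅(∑ f_l)‖_{L^{2r}}`, one has
`‖(∑ 𝔅(f_l)²)^{1/2}‖_{L^{2r}} ≤ C_{r,A} ‖𝔅(∑ f_l)‖_{L^{2r}}`. -/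
theorem stmt14 (r : ℕ) (hr : 0 < r) (A : ℝ) :
    ∃ C : ℝ, 0 < C ∧
      ∀ (X : Type u) [MeasurableSpace X] (μ : Measure X) [SigmaFinite μ]
        (V : Type v) [AddCommGroup V] [Module ℝ V]
        (B : V →ₗ[ℝ] V →ₗ[ℝ] ℝ),
        (∀ u v : V, B u v = B v u) → (∀ v : V, 0 ≤ B v v) →
        ∀ (L : ℕ) (f : Fin L → X → V),
        (∀ l : Fin (2 * r) → Fin L,
          Measurable (fun x =>
            ∏ i : Fin r, B (f (l ⟨2 * i.1, by have := i.isLt; omega⟩) x)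
              (f (l ⟨2 * i.1 + 1, by have := i.isLt; omega⟩) x))) →
        (∀ l : Fin (2 * r) → Fin L,
          Integrable (fun x =>
            ∏ i : Fin r, B (f (l ⟨2 * i.1, by have := i.isLt; omega⟩) x)
              (f (l ⟨2 * i.1 + 1, by have := i.isLt; omega⟩) x)) μ) →
        (∀ l : Fin (2 * r) → Fin L, Function.Injective l →
          ∫ x, (∏ i : Fin r, B (f (l ⟨2 * i.1, by have := i.isLt; omega⟩) x)
              (f (l ⟨2 * i.1 + 1, by have := i.isLt; omega⟩) x)) ∂μ = 0) →
        (∫ x, ∑ l : Fin L, Real.sqrt (B (f l x) (f l x)) ^ (2 * r) ∂μ)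
            ^ (1 / (2 * r : ℝ))
          ≤ A * (∫ x, Real.sqrt (B (∑ l : Fin L, f l x) (∑ l : Fin L, f l x))
              ^ (2 * r) ∂μ) ^ (1 / (2 * r : ℝ)) →
        (∫ x, (∑ l : Fin L, Real.sqrt (B (f l x) (f l x)) ^ 2) ^ r ∂μ)
            ^ (1 / (2 * r : ℝ))
          ≤ C * (∫ x, Real.sqrt (B (∑ l : Fin L, f l x) (∑ l : Fin L, f l x))
              ^ (2 * r) ∂μ) ^ (1 / (2 * r : ℝ)) := by
  
  classical
  obtain ⟨C, hC, hpt⟩ := so_pointwise r hr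
  refine ⟨(C * (1 + |A| ^ (2 * r))) ^ (1 / (2 * r : ℝ)), by positivity, ?_⟩
  intro X _ μ _ V _ _ B hsym hpos L f _ hIntg horth hA
  have hterm : ∀ (l : Fin r ⊕ Fin r → Fin L), (fun x =>
            ∏ i : Fin r, B (f ((l ∘ soD r) ⟨2 * i.1, by have := i.isLt; omega⟩) x)
              (f ((l ∘ soD r) ⟨2 * i.1 + 1, by have := i.isLt; omega⟩) x)) =
      fun x => soM B r (fun p => f (l p) x) := by
    intro l
    funext x
    rw [soM_apply]
    refine Finset.prod_congr rfl fun i _ => ?_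
    simp only [Function.comp, soD_even, soD_odd]
  have hI : ∀ l : Fin r ⊕ Fin r → Fin L, Integrable (fun x => soM B r (fun p => f (l p) x)) μ := by
    intro l
    rw [← hterm]
    exact hIntg _
  have hO : ∀ l : Fin r ⊕ Fin r → Fin L, Function.Injective l →
      ∫ x, soM B r (fun p => f (l p) x) ∂μ = 0 := by
    intro l hl
    rw [← hterm]
    exact horth _ (hl.comp (soD_inj r))
  have hsq : ∀ v, Real.sqrt (B v v) ^ (2 * r) = B v v ^ r := fun v => by
    rw [pow_mul, Real.sq_sqrt (hpos v)]
  have hsq2 : ∀ v, Real.sqrt (B v v) ^ 2 = B v v := fun v => Real.sq_sqrt (hpos v)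
  simp only [hsq, hsq2] at hA ⊢
  have hDint : Integrable (fun x => ∑ l : Fin r ⊕ Fin r → Fin L with soInj l,
        soM B r (fun p => f (l p) x)) μ := integrable_finsetSum _ fun l _ => hI l
  have hD0 : ∫ x, (∑ l : Fin r ⊕ Fin r → Fin L with soInj l,
        soM B r (fun p => f (l p) x)) ∂μ = 0 := by
    rw [integral_finsetSum _ fun l _ => hI l]
    exact Finset.sum_eq_zero fun l hl => hO l (Finset.mem_filter.1 hl).2
  have hFint : Integrable (fun x => B (∑ l, f l x) (∑ l, f l x) ^ r) μ := by
    have : (fun x => B (∑ l, f l x) (∑ l, f l x) ^ r) =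
        fun x => ∑ l : Fin r ⊕ Fin r → Fin L, soM B r (fun p => f (l p) x) := by
      funext x
      have h := (soM B r).map_sum (fun (_ : Fin r ⊕ Fin r) (j : Fin L) => f j x)
      rw [← h, soM_apply]
      simp
    rw [this]
    exact integrable_finsetSum _ fun l _ => hI l
  have hSint : Integrable (fun x => (∑ l, B (f l x) (f l x)) ^ r) μ := by
    have : (fun x => (∑ l, B (f l x) (f l x)) ^ r) = fun x => ∑ l : Fin r ⊕ Fin r → Fin L with
        soCons (soS (soE0 r)) l, soM B r (fun p => f (l p) x) := by
      funext x
      rw [← soT_E0 B r (fun l => f l x)]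
      rfl
    rw [this]
    exact integrable_finsetSum _ fun l _ => hI l
  have hMint : Integrable (fun x => ∑ l, B (f l x) (f l x) ^ r) μ := by
    refine integrable_finsetSum _ fun j _ => ?_
    have := hI (fun _ => j)
    simpa [soM_apply] using this
  set I1 := ∫ x, B (∑ l, f l x) (∑ l, f l x) ^ r ∂μ with hI1
  set I2 := ∫ x, ∑ l, B (f l x) (f l x) ^ r ∂μ with hI2
  set I3 := ∫ x, (∑ l, B (f l x) (f l x)) ^ r ∂μ with hI3
  have hI10 : 0 ≤ I1 := integral_nonneg fun x => pow_nonneg (hpos _) _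
  have hI20 : 0 ≤ I2 := integral_nonneg fun x => Finset.sum_nonneg fun j _ => pow_nonneg (hpos _) _
  have hI30 : 0 ≤ I3 := integral_nonneg fun x =>
    pow_nonneg (Finset.sum_nonneg fun j _ => hpos _) _
  have hmain : I3 ≤ C * (I1 + I2) := by
    have hle := integral_mono (μ := μ) hSint
      (((hDint.const_mul ((-1) ^ r)).const_mul 2).add ((hFint.add hMint).const_mul C))
      (fun x => hpt V B hsym hpos L (fun l => f l x))
    refine hle.trans (le_of_eq ?_)
    have e1 := integral_add ((hDint.const_mul ((-1) ^ r)).const_mul 2)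
      ((hFint.add hMint).const_mul C)
    refine e1.trans ?_
    rw [integral_const_mul, integral_const_mul, hD0, integral_const_mul]
    have e2 := integral_add hFint hMint
    have e3 : ∫ x, ((fun x => B (∑ l, f l x) (∑ l, f l x) ^ r) +
      fun x => ∑ l, B (f l x) (f l x) ^ r) x ∂μ = I1 + I2 := e2
    rw [e3]
    ring
  have hrr : (0 : ℝ) < 2 * r := by positivity
  have hA2 : I2 ≤ |A| ^ (2 * r) * I1 := by
    have h1 : I2 ^ (1 / (2 * r : ℝ)) ≤ |A| * I1 ^ (1 / (2 * r : ℝ)) :=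
      hA.trans (mul_le_mul_of_nonneg_right (le_abs_self A) (by positivity))
    have h2 := pow_le_pow_left₀ (by positivity) h1 (2 * r)
    have h3 : ∀ y : ℝ, 0 ≤ y → (y ^ (1 / (2 * r : ℝ))) ^ (2 * r) = y := by
      intro y hy
      rw [← Real.rpow_natCast, ← Real.rpow_mul hy]
      push_cast
      rw [one_div_mul_cancel hrr.ne', Real.rpow_one]
    rw [mul_pow, h3 _ hI20, h3 _ hI10] at h2
    exact h2
  have hfin : I3 ≤ (C * (1 + |A| ^ (2 * r))) * I1 := by
    have : C * (I1 + I2) ≤ C * (I1 + |A| ^ (2 * r) * I1) := by gcongr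
    linarith
  rw [← Real.mul_rpow (by positivity) hI10]
  exact Real.rpow_le_rpow hI30 hfin (by positivity)
end
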